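/- arXiv:2306.04258 — 2 statements merged into one kernel-verified Lean document; each statement's English description precedes it below -/
import Mathlib

section
/- Let g > 0 and let x > y > z > 0 be real numbers. Put φ = arcsin(√(x²−y²)/x), m = (x²−z²)/(x²−y²) (note that m·sin²θ ≤ (x²−z²)/x² < 1 for all θ ∈ [0,φ], so the elliptic integrals below are defined), E₁ = E(φ|m), F₁ = F(φ|m), and P₁ = x·(x²−y²)^(3/2)·(x²−z²)²·(y²−z²)². Then the improper integral C₁(x,y,z) converges and C₁(x,y,z) = (4πg/P₁)·( y·z·√(x²−y²)·(x²−z²)·(z² − 2x² + y²) + x·((x⁴ + y²z²)(y² + z²) + x²(y⁴ − 6y²z² + z⁴))·E₁ − x·(y²−z²)·(y²z² + x²(y² − 2z²))·F₁ ). -/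
open Real MeasureTheory

/-- `C₁(x,y,z) = 2πg ∫₀^∞ s·((s+x²)(s+y²)(s+z²))^(−3/2) ds`. -/
noncomputable def riC1 (g x y z : ℝ) : ℝ :=
  2 * π * g * ∫ s in Set.Ioi (0:ℝ),
    s * ((s + x ^ 2) * (s + y ^ 2) * (s + z ^ 2)) ^ (-(3:ℝ)/2)

/-- Incomplete elliptic integral of the first kind, `F(φ|m)` (Mathematica convention). -/
noncomputable def ellF (φ m : ℝ) : ℝ :=
  ∫ θ in (0:ℝ)..φ, (1 - m * Real.sin θ ^ 2) ^ (-(1:ℝ)/2)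

/-- Incomplete elliptic integral of the second kind, `E(φ|m)` (Mathematica convention). -/
noncomputable def ellE (φ m : ℝ) : ℝ :=
  ∫ θ in (0:ℝ)..φ, (1 - m * Real.sin θ ^ 2) ^ ((1:ℝ)/2)

open Set Filter Topology

lemma ell_aux (m φ : ℝ) (c : ℝ) (hm : 0 ≤ m) (h0 : 0 ≤ φ) (h1 : φ ≤ π / 2)
    (h : m * sin φ ^ 2 < 1) :
    HasDerivAt (fun u : ℝ => ∫ θ in (0:ℝ)..u, (1 - m * Real.sin θ ^ 2) ^ c)
      ((1 - m * Real.sin φ ^ 2) ^ c) φ := by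
  have key : ∀ θ ∈ Set.Icc 0 φ, 0 < 1 - m * sin θ ^ 2 := by
    intro θ hθ
    have hs : sin θ ≤ sin φ := Real.sin_le_sin_of_le_of_le_pi_div_two
      (by linarith [hθ.1, Real.pi_pos]) h1 hθ.2
    have hs0 : 0 ≤ sin θ := Real.sin_nonneg_of_nonneg_of_le_pi hθ.1
      (by linarith [hθ.2, Real.pi_pos])
    have : sin θ ^ 2 ≤ sin φ ^ 2 := by gcongr
    nlinarith [mul_le_mul_of_nonneg_left this hm]
  have cont : ∀ θ ∈ Set.Icc 0 φ, ContinuousAt (fun θ => (1 - m * Real.sin θ ^ 2) ^ c) θ := by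
    intro θ hθ
    refine ContinuousAt.rpow_const ?_ (Or.inl (key θ hθ).ne')
    fun_prop
  refine intervalIntegral.integral_hasDerivAt_right ?_ ?_ (cont φ ⟨h0, le_rfl⟩)
  · apply ContinuousOn.intervalIntegrable
    rw [Set.uIcc_of_le h0]
    exact fun θ hθ => (cont θ hθ).continuousWithinAt
  · have : Measurable (fun θ => (1 - m * Real.sin θ ^ 2) ^ c) := by fun_prop
    exact this.stronglyMeasurable.stronglyMeasurableAtFilter

lemma theta_deriv (X Y s : ℝ) (hX : Y < X) (hY : 0 < Y) (hs : 0 ≤ s) :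
    HasDerivAt (fun s => arcsin (√(X - Y) / √(s + X)))
      (-(√(X - Y) / 2) / ((s + X) * √(s + Y))) s := by
  have hk : 0 < √(X - Y) := Real.sqrt_pos.2 (by linarith)
  have hp : 0 < √(s + X) := Real.sqrt_pos.2 (by linarith)
  have hq : 0 < √(s + Y) := Real.sqrt_pos.2 (by linarith)
  have hk2 : √(X - Y) ^ 2 = X - Y := Real.sq_sqrt (by linarith)
  have hp2 : √(s + X) ^ 2 = s + X := Real.sq_sqrt (by linarith)
  have hlt : √(X - Y) / √(s + X) < 1 := by
    rw [div_lt_one hp]; exact Real.sqrt_lt_sqrt (by linarith) (by linarith)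
  have hpos : 0 < √(X - Y) / √(s + X) := by positivity
  have hd : HasDerivAt (fun s => √(X - Y) / √(s + X)) 
      ((0 * √(s + X) - √(X - Y) * (1 / (2 * √(s + X)))) / √(s + X) ^ 2) s := by
    refine (hasDerivAt_const s (√(X - Y))).div ?_ hp.ne'
    exact ((hasDerivAt_id s).add_const X).sqrt (by simp; linarith)
  have h := (Real.hasDerivAt_arcsin (by linarith) hlt.ne).comp s hd
  refine h.congr_deriv ?_
  have : √(1 - (√(X - Y) / √(s + X)) ^ 2) = √(s + Y) / √(s + X) := by
    rw [div_pow, hk2, hp2, ← Real.sqrt_div (by linarith)]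
    congr 1
    have : s + X ≠ 0 := by linarith
    field_simp; ring
  rw [this, hp2]
  have : s + X ≠ 0 := by linarith
  field_simp
  ring

lemma comp_deriv (X Y Z s c : ℝ) (hX : Y < X) (hY : Z < Y) (hZ : 0 < Z) (hs : 0 ≤ s) :
    HasDerivAt (fun s => ∫ θ in (0:ℝ)..(arcsin (√(X - Y) / √(s + X))),
        (1 - ((X - Z) / (X - Y)) * Real.sin θ ^ 2) ^ c)
      (((s + Z) / (s + X)) ^ c * (-(√(X - Y) / 2) / ((s + X) * √(s + Y)))) s := by
  have hk : 0 < √(X - Y) := Real.sqrt_pos.2 (by linarith)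
  have hp : 0 < √(s + X) := Real.sqrt_pos.2 (by linarith)
  have hk2 : √(X - Y) ^ 2 = X - Y := Real.sq_sqrt (by linarith)
  have hp2 : √(s + X) ^ 2 = s + X := Real.sq_sqrt (by linarith)
  have hlt : √(X - Y) / √(s + X) < 1 := by
    rw [div_lt_one hp]; exact Real.sqrt_lt_sqrt (by linarith) (by linarith)
  have hpos : 0 < √(X - Y) / √(s + X) := by positivity
  have hsin : sin (arcsin (√(X - Y) / √(s + X))) = √(X - Y) / √(s + X) :=
    Real.sin_arcsin (by linarith) hlt.le
  have hval : 1 - ((X - Z) / (X - Y)) * sin (arcsin (√(X - Y) / √(s + X))) ^ 2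
      = (s + Z) / (s + X) := by
    rw [hsin, div_pow, hk2, hp2]
    have : s + X ≠ 0 := by linarith
    have : X - Y ≠ 0 := by linarith
    field_simp; ring
  have hvpos : 0 < (s + Z) / (s + X) := div_pos (by linarith) (by linarith)
  have h1 := ell_aux ((X - Z) / (X - Y)) (arcsin (√(X - Y) / √(s + X))) c
    (div_nonneg (by linarith) (by linarith)) (Real.arcsin_nonneg.2 hpos.le)
    (Real.arcsin_le_pi_div_two _) (by linarith)
  rw [hval] at h1
  exact h1.comp s (theta_deriv X Y s hX (by linarith) hs)

lemma comp_lim (X Y Z c : ℝ) (hX : Y < X) (hY : Z < Y) :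
    Tendsto (fun s => ∫ θ in (0:ℝ)..(arcsin (√(X - Y) / √(s + X))),
        (1 - ((X - Z) / (X - Y)) * Real.sin θ ^ 2) ^ c) atTop (𝓝 0) := by
  have h1 := (ell_aux ((X - Z) / (X - Y)) 0 c
    (div_nonneg (by linarith) (by linarith)) le_rfl (by positivity) (by simp)).continuousAt
  have h2 : Tendsto (fun s => arcsin (√(X - Y) / √(s + X))) atTop (𝓝 0) := by
    have h3 : Tendsto (fun s : ℝ => √(X - Y) / √(s + X)) atTop (𝓝 0) :=
      tendsto_const_nhds.div_atTop
        (Real.tendsto_sqrt_atTop.comp (tendsto_atTop_add_const_right _ _ tendsto_id))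
    simpa [Function.comp_def] using (Real.continuous_arcsin.tendsto 0).comp h3
  have := h1.tendsto.comp h2
  simpa [Function.comp_def] using this

lemma alg_lim (X Y Z a b : ℝ) (hX : 0 < X) (hY : 0 < Y) (hZ : 0 < Z) :
    Tendsto (fun s => (a + b * s) / (√(s + X) * √(s + Y) * √(s + Z))) atTop (𝓝 0) := by
  have hinv : ∀ X : ℝ, Tendsto (fun s : ℝ => 1 / √(s + X)) atTop (𝓝 0) := fun X =>
    tendsto_const_nhds.div_atTop
        (Real.tendsto_sqrt_atTop.comp (tendsto_atTop_add_const_right _ _ tendsto_id))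
  have hb : Tendsto (fun s : ℝ => (|a| / X + |b|) * (1 / √(s + Z)) * (√(s+X) / √(s + Y)))
      atTop (𝓝 0) := by
    have h1 : Tendsto (fun s : ℝ => √(s+X) / √(s + Y)) atTop (𝓝 1) := by
      have h2 : Tendsto (fun s : ℝ => 1 + (X - Y) / (s + Y)) atTop (𝓝 (1 + 0)) :=
        tendsto_const_nhds.add (tendsto_const_nhds.div_atTop
          (tendsto_atTop_add_const_right _ _ tendsto_id))
      have h3 := (Real.continuous_sqrt.tendsto _).comp h2
      rw [add_zero, Real.sqrt_one] at h3
      refine h3.congr' ?_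
      filter_upwards [eventually_ge_atTop 0] with s hs
      simp only [Function.comp]
      rw [← Real.sqrt_div (by linarith)]
      congr 1
      have : s + Y ≠ 0 := by linarith
      field_simp; ring
    simpa using ((hinv Z).const_mul (|a| / X + |b|)).mul h1
  refine squeeze_zero_norm' ?_ hb
  filter_upwards [eventually_ge_atTop 0] with s hs
  have hp : 0 < √(s + X) := Real.sqrt_pos.2 (by linarith)
  have hq : 0 < √(s + Y) := Real.sqrt_pos.2 (by linarith)
  have hr : 0 < √(s + Z) := Real.sqrt_pos.2 (by linarith)
  have hp2 : √(s + X) ^ 2 = s + X := Real.sq_sqrt (by linarith)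
  rw [norm_div, Real.norm_eq_abs, Real.norm_of_nonneg (by positivity : 0 ≤ √(s + X) * √(s + Y) * √(s + Z)),
    div_le_iff₀ (by positivity)]
  have e : (|a| / X + |b|) * (1 / √(s + Z)) * (√(s+X) / √(s + Y)) * (√(s + X) * √(s + Y) * √(s + Z))
     = (|a| / X + |b|) * (s + X) := by
    field_simp
    rw [hp2]
  rw [e]
  have h4 : |a + b * s| ≤ |a| + |b| * s := by
    refine (abs_add_le _ _).trans ?_
    rw [abs_mul, abs_of_nonneg hs]
  have h5 : (|a| / X + |b|) * (s + X) = |a| + |b| * s + (|a| / X * s + |b| * X) := by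
    field_simp; ring
  have : 0 ≤ |a| / X * s + |b| * X := by positivity
  linarith

noncomputable def GG (X Y Z s : ℝ) : ℝ :=
  ((2 * Y * Z * (2 * X - Y - Z) / ((X - Y) * (X - Z) * (Y - Z) ^ 2)) +
   (2 * (X * Y + X * Z - 2 * Y * Z) / ((X - Y) * (X - Z) * (Y - Z) ^ 2)) * s) /
    (√(s + X) * √(s + Y) * √(s + Z))
  - 2 * ((X ^ 2 + Y * Z) * (Y + Z) + X * (Y ^ 2 - 6 * Y * Z + Z ^ 2)) /
    (√(X - Y) * (X - Y) * (X - Z) ^ 2 * (Y - Z) ^ 2) *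
    ellE (arcsin (√(X - Y) / √(s + X))) ((X - Z) / (X - Y))
  + 2 * ((Y - Z) * (Y * Z + X * (Y - 2 * Z))) /
    (√(X - Y) * (X - Y) * (X - Z) ^ 2 * (Y - Z) ^ 2) *
    ellF (arcsin (√(X - Y) / √(s + X))) ((X - Z) / (X - Y))

lemma GG_deriv (X Y Z s : ℝ) (hX : Y < X) (hY : Z < Y) (hZ : 0 < Z) (hs : 0 ≤ s) :
    HasDerivAt (GG X Y Z) (s * ((s + X) * (s + Y) * (s + Z)) ^ (-(3:ℝ)/2)) s := by
  have hk : 0 < √(X - Y) := Real.sqrt_pos.2 (by linarith)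
  have hp : 0 < √(s + X) := Real.sqrt_pos.2 (by linarith)
  have hq : 0 < √(s + Y) := Real.sqrt_pos.2 (by linarith)
  have hr : 0 < √(s + Z) := Real.sqrt_pos.2 (by linarith)
  have hp2 : √(s + X) ^ 2 = s + X := Real.sq_sqrt (by linarith)
  have hq2 : √(s + Y) ^ 2 = s + Y := Real.sq_sqrt (by linarith)
  have hr2 : √(s + Z) ^ 2 = s + Z := Real.sq_sqrt (by linarith)
  have dp : ∀ X, 0 < s + X → HasDerivAt (fun s => √(s + X)) (1 / (2 * √(s + X))) s := fun X h =>
    ((hasDerivAt_id s).add_const X).sqrt h.ne'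
  have d1 := (((hasDerivAt_id s).const_mul
    (2 * (X * Y + X * Z - 2 * Y * Z) / ((X - Y) * (X - Z) * (Y - Z) ^ 2))).const_add
    (2 * Y * Z * (2 * X - Y - Z) / ((X - Y) * (X - Z) * (Y - Z) ^ 2))).div
    (((dp X (by linarith)).mul (dp Y (by linarith))).mul (dp Z (by linarith)))
    (by simp only [Pi.mul_apply]; positivity)
  have dE := (comp_deriv X Y Z s (1/2) hX hY hZ hs).const_mul
    (2 * ((X ^ 2 + Y * Z) * (Y + Z) + X * (Y ^ 2 - 6 * Y * Z + Z ^ 2)) /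
    (√(X - Y) * (X - Y) * (X - Z) ^ 2 * (Y - Z) ^ 2))
  have dF := (comp_deriv X Y Z s (-(1:ℝ)/2) hX hY hZ hs).const_mul
    (2 * ((Y - Z) * (Y * Z + X * (Y - 2 * Z))) /
    (√(X - Y) * (X - Y) * (X - Z) ^ 2 * (Y - Z) ^ 2))
  refine ((d1.sub dE).add dF).congr_deriv ?_
  have e1 : ((s + Z) / (s + X)) ^ ((1:ℝ)/2) = √(s + Z) / √(s + X) := by
    rw [← Real.sqrt_eq_rpow, Real.sqrt_div (by linarith)]
  have e2 : ((s + Z) / (s + X)) ^ (-(1:ℝ)/2) = √(s + X) / √(s + Z) := by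
    rw [neg_div, Real.rpow_neg (div_nonneg (by linarith) (by linarith)), e1, inv_div]
  have e3 : ((s + X) * (s + Y) * (s + Z)) ^ (-(3:ℝ)/2)
      = 1 / (√(s + X) * √(s + Y) * √(s + Z)) ^ 3 := by
    rw [← hp2, ← hq2, ← hr2, ← mul_pow, ← mul_pow, Real.sqrt_sq hp.le, Real.sqrt_sq hq.le,
      Real.sqrt_sq hr.le, ← Real.rpow_natCast _ 2, ← Real.rpow_mul (by positivity),
      ← Real.rpow_natCast _ 3, one_div, ← Real.rpow_neg (by positivity)]
    norm_num
  rw [e1, e2, e3]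
  simp only [Pi.mul_apply, id]
  have h1 : X - Y ≠ 0 := by linarith
  have h2 : X - Z ≠ 0 := by linarith
  have h3 : Y - Z ≠ 0 := by linarith
  generalize √(X - Y) = k at *
  generalize √(s + X) = p at *
  generalize √(s + Y) = q at *
  generalize √(s + Z) = r at *
  obtain rfl : X = p ^ 2 - s := by linarith
  obtain rfl : Y = q ^ 2 - s := by linarith
  obtain rfl : Z = r ^ 2 - s := by linarith
  have h1 : p ^ 2 - q ^ 2 ≠ 0 := by intro h; apply h1; linarith
  have h2 : p ^ 2 - r ^ 2 ≠ 0 := by intro h; apply h2; linarith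
  have h3 : q ^ 2 - r ^ 2 ≠ 0 := by intro h; apply h3; linarith
  simp only [sub_sub_sub_cancel_right, sub_add_cancel, add_sub_cancel]
  field_simp
  ring

lemma GG_lim (X Y Z : ℝ) (hX : Y < X) (hY : Z < Y) (hZ : 0 < Z) :
    Tendsto (GG X Y Z) atTop (𝓝 0) := by
  have h1 := alg_lim X Y Z (2 * Y * Z * (2 * X - Y - Z) / ((X - Y) * (X - Z) * (Y - Z) ^ 2))
    (2 * (X * Y + X * Z - 2 * Y * Z) / ((X - Y) * (X - Z) * (Y - Z) ^ 2))
    (by linarith) (by linarith) hZ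
  have dE := (comp_lim X Y Z (1/2) hX hY).const_mul
    (2 * ((X ^ 2 + Y * Z) * (Y + Z) + X * (Y ^ 2 - 6 * Y * Z + Z ^ 2)) /
    (√(X - Y) * (X - Y) * (X - Z) ^ 2 * (Y - Z) ^ 2))
  have dF := (comp_lim X Y Z (-(1:ℝ)/2) hX hY).const_mul
    (2 * ((Y - Z) * (Y * Z + X * (Y - 2 * Z))) /
    (√(X - Y) * (X - Y) * (X - Z) ^ 2 * (Y - Z) ^ 2))
  have := (h1.sub dE).add dF
  simp only [mul_zero, sub_zero, add_zero] at this
  exact this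

/-- For `g > 0` and `x > y > z > 0`, the improper integral defining
`C₁(x,y,z)` converges, and with `φ = arcsin(√(x²−y²)/x)`, `m = (x²−z²)/(x²−y²)`,
`E₁ = E(φ|m)`, `F₁ = F(φ|m)` and `P₁ = x(x²−y²)^{3/2}(x²−z²)²(y²−z²)²` one has the closed
form of Lemma C.1. -/
theorem stmt_0 (g x y z : ℝ) (hg : 0 < g) (hyx : y < x) (hzy : z < y) (hz : 0 < z) :
    IntegrableOn
      (fun s : ℝ => s * ((s + x ^ 2) * (s + y ^ 2) * (s + z ^ 2)) ^ (-(3:ℝ)/2))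
      (Set.Ioi 0) ∧
    riC1 g x y z =
      4 * π * g /
          (x * (x ^ 2 - y ^ 2) ^ ((3:ℝ)/2) * (x ^ 2 - z ^ 2) ^ 2 * (y ^ 2 - z ^ 2) ^ 2) *
        (y * z * Real.sqrt (x ^ 2 - y ^ 2) * (x ^ 2 - z ^ 2) * (z ^ 2 - 2 * x ^ 2 + y ^ 2)
          + x * ((x ^ 4 + y ^ 2 * z ^ 2) * (y ^ 2 + z ^ 2)
                  + x ^ 2 * (y ^ 4 - 6 * y ^ 2 * z ^ 2 + z ^ 4)) *
              ellE (Real.arcsin (Real.sqrt (x ^ 2 - y ^ 2) / x))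
                ((x ^ 2 - z ^ 2) / (x ^ 2 - y ^ 2))
          - x * (y ^ 2 - z ^ 2) * (y ^ 2 * z ^ 2 + x ^ 2 * (y ^ 2 - 2 * z ^ 2)) *
              ellF (Real.arcsin (Real.sqrt (x ^ 2 - y ^ 2) / x))
                ((x ^ 2 - z ^ 2) / (x ^ 2 - y ^ 2))) := by
  have hy : 0 < y := hz.trans hzy
  have hx : 0 < x := hy.trans hyx
  have hX : y ^ 2 < x ^ 2 := by gcongr
  have hY : z ^ 2 < y ^ 2 := by gcongr
  have hZ : 0 < z ^ 2 := by positivity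
  have hd : ∀ s ∈ Set.Ioi (0:ℝ), HasDerivAt (GG (x ^ 2) (y ^ 2) (z ^ 2))
      (s * ((s + x ^ 2) * (s + y ^ 2) * (s + z ^ 2)) ^ (-(3:ℝ)/2)) s := fun s hs =>
    GG_deriv _ _ _ s hX hY hZ (le_of_lt hs)
  have hc : ContinuousWithinAt (GG (x ^ 2) (y ^ 2) (z ^ 2)) (Set.Ici 0) 0 :=
    (GG_deriv _ _ _ 0 hX hY hZ le_rfl).continuousAt.continuousWithinAt
  have hn : ∀ s ∈ Set.Ioi (0:ℝ),
      0 ≤ s * ((s + x ^ 2) * (s + y ^ 2) * (s + z ^ 2)) ^ (-(3:ℝ)/2) := by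
    intro s hs
    have : 0 < s := hs
    positivity
  have hl := GG_lim _ _ _ hX hY hZ
  refine ⟨integrableOn_Ioi_deriv_of_nonneg hc hd hn hl, ?_⟩
  rw [riC1, integral_Ioi_of_hasDerivAt_of_nonneg hc hd hn hl, GG]
  simp only [zero_add, Real.sqrt_sq hx.le, Real.sqrt_sq hy.le, Real.sqrt_sq hz.le]
  have e : (x ^ 2 - y ^ 2) ^ ((3:ℝ)/2) = √(x ^ 2 - y ^ 2) * (x ^ 2 - y ^ 2) := by
    rw [show (3:ℝ)/2 = 1/2 + 1 by norm_num, Real.rpow_add (by linarith), Real.rpow_one,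
      Real.sqrt_eq_rpow]
  rw [e]
  have h1 : x ^ 2 - y ^ 2 ≠ 0 := by linarith
  have h2 : x ^ 2 - z ^ 2 ≠ 0 := by linarith
  have h3 : y ^ 2 - z ^ 2 ≠ 0 := by linarith
  have hk : √(x ^ 2 - y ^ 2) ≠ 0 := (Real.sqrt_pos.2 (by linarith)).ne'
  generalize ellE (arcsin (√(x ^ 2 - y ^ 2) / x)) ((x ^ 2 - z ^ 2) / (x ^ 2 - y ^ 2)) = E
  generalize ellF (arcsin (√(x ^ 2 - y ^ 2) / x)) ((x ^ 2 - z ^ 2) / (x ^ 2 - y ^ 2)) = F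
  generalize √(x ^ 2 - y ^ 2) = k at *
  field_simp
  ring
end

section
/- Let (b₁,b₂) ∈ B with b₃ = (b₁b₂)^(−1), and assume 0 ≤ G^S₊(b₁,b₂,b₃) < G^S₋(b₁,b₂,b₃) (the counter-parallel S₂ regime). Put N₊ = N^S₊(b₁,b₂,b₃) and N₋ = N^S₋(b₁,b₂,b₃) (so N₋ < 0), and set L = N₊, R = −N₋. Then the point p* = (b₁, b₂, 0, 0, 0, N₊, 0, 0, N₋, 0) is an equilibrium of the reduced equations of motion, and p* is Liapunov stable relative to S_{L,R}. -/
open Real MeasureTheory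

/-- `C₂(x,y,z) = 2πg ∫₀^∞ s²·((s+x²)(s+y²)(s+z²))^(−3/2) ds`. -/
noncomputable def riC2 (g x y z : ℝ) : ℝ :=
  2 * π * g * ∫ s in Set.Ioi (0:ℝ),
    s ^ 2 * ((s + x ^ 2) * (s + y ^ 2) * (s + z ^ 2)) ^ (-(3:ℝ)/2)

/-- `G^S₊(x,y,z)`. -/
noncomputable def GSp (g x y z : ℝ) : ℝ :=
  ((x - z) ^ 4 / (x * z)) *
    ((x * y ^ 2 * z + (x ^ 2 * y ^ 2 - x ^ 2 * z ^ 2 + y ^ 2 * z ^ 2)) * riC1 g x y z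
      + (x * z + y ^ 2) * riC2 g x y z)

/-- `G^S₋(x,y,z)`. -/
noncomputable def GSm (g x y z : ℝ) : ℝ :=
  ((x + z) ^ 4 / (x * z)) *
    ((x * y ^ 2 * z - (x ^ 2 * y ^ 2 - x ^ 2 * z ^ 2 + y ^ 2 * z ^ 2)) * riC1 g x y z
      + (x * z - y ^ 2) * riC2 g x y z)

/-- `N^S₊(x,y,z) = ½(√G^S₊ + √G^S₋)`. -/
noncomputable def NSp (g x y z : ℝ) : ℝ :=
  (Real.sqrt (GSp g x y z) + Real.sqrt (GSm g x y z)) / 2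

/-- `N^S₋(x,y,z) = ½(√G^S₊ − √G^S₋)`. -/
noncomputable def NSm (g x y z : ℝ) : ℝ :=
  (Real.sqrt (GSp g x y z) - Real.sqrt (GSm g x y z)) / 2

/-- Membership in `B = {(b₁,b₂) : b₁ > b₂ > b₁^(−1/2) > 0}`. -/
def memB (b1 b2 : ℝ) : Prop := b2 < b1 ∧ (Real.sqrt b1)⁻¹ < b2 ∧ 0 < (Real.sqrt b1)⁻¹

/-- The reduced Hamiltonian `H(b₁,b₂,c₁,c₂,m₁,…,m₆)` of the Riemann ellipsoid problem,
as a function on `ℝ¹⁰` (coordinates `p 0 = b₁, p 1 = b₂, p 2 = c₁, p 3 = c₂,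
p 4,…,p 9 = m₁,…,m₆`), with `b₃ = (b₁b₂)⁻¹`. -/
noncomputable def Hred (g : ℝ) (p : Fin 10 → ℝ) : ℝ :=
  let b1 := p 0; let b2 := p 1; let c1 := p 2; let c2 := p 3
  let m1 := p 4; let m2 := p 5; let m3 := p 6
  let m4 := p 7; let m5 := p 8; let m6 := p 9
  let b3 := (b1 * b2)⁻¹
  ((b2 ^ 2 + b3 ^ 2) * b1 ^ 2 * c1 ^ 2 + (b1 ^ 2 + b3 ^ 2) * b2 ^ 2 * c2 ^ 2
        - 2 * b3 * c1 * c2) /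
      (2 * (b1 ^ 2 * b2 ^ 2 + b1 ^ 2 * b3 ^ 2 + b2 ^ 2 * b3 ^ 2))
    + ((b1 ^ 2 + b2 ^ 2) * (m3 ^ 2 + m6 ^ 2) + 4 * b1 * b2 * m3 * m6) /
        (2 * (b1 ^ 2 - b2 ^ 2) ^ 2)
    + ((b1 ^ 2 + b3 ^ 2) * (m2 ^ 2 + m5 ^ 2) + 4 * b1 * b3 * m2 * m5) /
        (2 * (b1 ^ 2 - b3 ^ 2) ^ 2)
    + ((b2 ^ 2 + b3 ^ 2) * (m1 ^ 2 + m4 ^ 2) + 4 * b2 * b3 * m1 * m4) /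
        (2 * (b2 ^ 2 - b3 ^ 2) ^ 2)
    - 2 * π * g * ∫ s in Set.Ioi (0:ℝ),
        ((s + b1 ^ 2) * (s + b2 ^ 2) * (s + b3 ^ 2)) ^ (-(1:ℝ)/2)

/-- Partial derivative `∂H/∂pᵢ`. -/
noncomputable def pd (g : ℝ) (i : Fin 10) (p : Fin 10 → ℝ) : ℝ :=
  fderiv ℝ (Hred g) p (Pi.single i 1)

/-- The reduced vector field: `b' = ∂H/∂c`, `c' = −∂H/∂b`, `η_l' = η_l × ∇_{η_l}H`,
`η_r' = η_r × ∇_{η_r}H`. -/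
noncomputable def RVF (g : ℝ) (p : Fin 10 → ℝ) : Fin 10 → ℝ :=
  ![pd g 2 p, pd g 3 p, -pd g 0 p, -pd g 1 p,
    p 5 * pd g 6 p - p 6 * pd g 5 p,
    p 6 * pd g 4 p - p 4 * pd g 6 p,
    p 4 * pd g 5 p - p 5 * pd g 4 p,
    p 8 * pd g 9 p - p 9 * pd g 8 p,
    p 9 * pd g 7 p - p 7 * pd g 9 p,
    p 7 * pd g 8 p - p 8 * pd g 7 p]

/-- `γ` is a solution of the reduced equations of motion on the set `s ⊂ ℝ`
(staying in the domain `B × ℝ² × ℝ³ × ℝ³`). -/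
def IsSolution (g : ℝ) (γ : ℝ → Fin 10 → ℝ) (s : Set ℝ) : Prop :=
  ∀ t ∈ s, memB (γ t 0) (γ t 1) ∧
    ∀ i : Fin 10, HasDerivAt (fun τ => γ τ i) (RVF g (γ t) i) t

/-- Liapunov stability of an equilibrium `pstar` relative to
`S_{L,R} = {(b,c,η_l,η_r) : ‖η_l‖ = L, ‖η_r‖ = R}`. -/
def LiapunovStable (g L R : ℝ) (pstar : Fin 10 → ℝ) : Prop :=
  ∀ ε > 0, ∃ δ > 0, ∀ (T : ℝ) (γ : ℝ → Fin 10 → ℝ),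
    IsSolution g γ (Set.Ico 0 T) →
    Real.sqrt ((γ 0 4) ^ 2 + (γ 0 5) ^ 2 + (γ 0 6) ^ 2) = L →
    Real.sqrt ((γ 0 7) ^ 2 + (γ 0 8) ^ 2 + (γ 0 9) ^ 2) = R →
    dist (γ 0) pstar < δ →
    ∀ t ∈ Set.Ico (0:ℝ) T, dist (γ t) pstar < ε


section
open Real MeasureTheory

/-- general kernel -/
noncomputable def ker (k : ℕ) (a b c X Y Z s : ℝ) : ℝ :=
  s ^ k * ((s + X) ^ (-a) * (s + Y) ^ (-b) * (s + Z) ^ (-c))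

noncomputable def Kint (k : ℕ) (a b c X Y Z : ℝ) : ℝ :=
  ∫ s in Set.Ioi (0:ℝ), ker k a b c X Y Z s

lemma ker_nonneg {k : ℕ} {a b c X Y Z s : ℝ} (hX : 0 < X) (hY : 0 < Y) (hZ : 0 < Z)
    (hs : 0 < s) : 0 ≤ ker k a b c X Y Z s := by
  unfold ker; positivity

lemma ker_le {k : ℕ} {a b c X Y Z s m : ℝ} (ha : 0 ≤ a) (hb : 0 ≤ b) (hc : 0 ≤ c)
    (hm : 0 < m) (hX : m ≤ X) (hY : m ≤ Y) (hZ : m ≤ Z) (hs : 0 < s) :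
    ker k a b c X Y Z s ≤ (s + m) ^ ((k:ℝ) - (a + b + c)) := by
  have h0 : 0 < s + m := by linarith
  have e : (s + m) ^ ((k:ℝ) - (a + b + c)) =
      (s+m)^k * ((s + m) ^ (-a) * (s + m) ^ (-b) * (s + m) ^ (-c)) := by
    rw [← Real.rpow_natCast, ← Real.rpow_add h0, ← Real.rpow_add h0, ← Real.rpow_add h0]
    congr 1; ring
  rw [e]; unfold ker
  have h1 : (s + X) ^ (-a) ≤ (s + m) ^ (-a) :=
    Real.rpow_le_rpow_of_nonpos h0 (by linarith) (by linarith)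
  have h2 : (s + Y) ^ (-b) ≤ (s + m) ^ (-b) :=
    Real.rpow_le_rpow_of_nonpos h0 (by linarith) (by linarith)
  have h3 : (s + Z) ^ (-c) ≤ (s + m) ^ (-c) :=
    Real.rpow_le_rpow_of_nonpos h0 (by linarith) (by linarith)
  have hX' : 0 < s + X := by linarith
  have hY' : 0 < s + Y := by linarith
  have hZ' : 0 < s + Z := by linarith
  gcongr
  linarith

lemma ker_meas (k : ℕ) (a b c X Y Z : ℝ) :
    Measurable (ker k a b c X Y Z) := by
  unfold ker; fun_prop

lemma bound_int {e m : ℝ} (he : e < -1) (hm : 0 < m) :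
    IntegrableOn (fun s : ℝ => (s + m) ^ e) (Set.Ioi 0) :=
  integrableOn_add_rpow_Ioi_of_lt he (by linarith)

lemma ker_int {k : ℕ} {a b c X Y Z : ℝ} (ha : 0 ≤ a) (hb : 0 ≤ b) (hc : 0 ≤ c)
    (hX : 0 < X) (hY : 0 < Y) (hZ : 0 < Z) (h : (k:ℝ) + 1 < a + b + c) :
    IntegrableOn (ker k a b c X Y Z) (Set.Ioi 0) := by
  have hm : 0 < min X (min Y Z) := by positivity
  refine Integrable.mono' (bound_int (e := (k:ℝ) - (a+b+c)) (by linarith) hm)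
    (ker_meas ..).aestronglyMeasurable ?_
  refine (ae_restrict_iff' measurableSet_Ioi).2 (Filter.Eventually.of_forall fun s hs => ?_)
  have hs : 0 < s := hs
  rw [Real.norm_of_nonneg (ker_nonneg hX hY hZ hs)]
  exact ker_le ha hb hc hm (min_le_left _ _) ((min_le_right _ _).trans (min_le_left _ _))
    ((min_le_right _ _).trans (min_le_right _ _)) hs

open ContinuousLinearMap in
noncomputable def kerD (k : ℕ) (a b c : ℝ) (q : ℝ × ℝ × ℝ) (s : ℝ) : ℝ × ℝ × ℝ →L[ℝ] ℝ :=
  (-a * ker k (a+1) b c q.1 q.2.1 q.2.2 s) • fst ℝ ℝ (ℝ × ℝ)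
    + (-b * ker k a (b+1) c q.1 q.2.1 q.2.2 s) • (fst ℝ ℝ ℝ).comp (snd ℝ ℝ (ℝ × ℝ))
    + (-c * ker k a b (c+1) q.1 q.2.1 q.2.2 s) • (snd ℝ ℝ ℝ).comp (snd ℝ ℝ (ℝ × ℝ))

open ContinuousLinearMap in
lemma ker_hasF (k : ℕ) (a b c s : ℝ) (q : ℝ × ℝ × ℝ) (h1 : 0 < s + q.1) (h2 : 0 < s + q.2.1)
    (h3 : 0 < s + q.2.2) :
    HasFDerivAt (fun q : ℝ × ℝ × ℝ => ker k a b c q.1 q.2.1 q.2.2 s) (kerD k a b c q s) q := by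
  have f1 : HasFDerivAt (fun q : ℝ × ℝ × ℝ => q.1) (fst ℝ ℝ (ℝ × ℝ)) q := hasFDerivAt_fst
  have f2 : HasFDerivAt (fun q : ℝ × ℝ × ℝ => q.2.1)
    ((fst ℝ ℝ ℝ).comp (snd ℝ ℝ (ℝ × ℝ))) q := hasFDerivAt_fst.comp q hasFDerivAt_snd
  have f3 : HasFDerivAt (fun q : ℝ × ℝ × ℝ => q.2.2)
    ((snd ℝ ℝ ℝ).comp (snd ℝ ℝ (ℝ × ℝ))) q := hasFDerivAt_snd.comp q hasFDerivAt_snd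
  have g1 := (f1.const_add s).rpow_const (p := -a) (Or.inl h1.ne')
  have g2 := (f2.const_add s).rpow_const (p := -b) (Or.inl h2.ne')
  have g3 := (f3.const_add s).rpow_const (p := -c) (Or.inl h3.ne')
  have := ((g1.mul g2).mul g3).const_mul (s ^ k)
  refine HasFDerivAt.congr_fderiv this ?_
  ext <;> simp [kerD, ker] <;> ring_nf

lemma Kint_hasF {k : ℕ} {a b c : ℝ} (ha : 0 ≤ a) (hb : 0 ≤ b) (hc : 0 ≤ c)
    (h : (k:ℝ) + 1 < a + b + c) (q : ℝ × ℝ × ℝ) (h1 : 0 < q.1) (h2 : 0 < q.2.1)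
    (h3 : 0 < q.2.2) :
    HasFDerivAt (fun q : ℝ × ℝ × ℝ => Kint k a b c q.1 q.2.1 q.2.2)
      (∫ s in Set.Ioi (0:ℝ), kerD k a b c q s) q := by
  set m := min q.1 (min q.2.1 q.2.2) / 2 with hmdef
  have hm : 0 < m := by positivity
  have m1 : 2 * m ≤ q.1 := by rw [hmdef]; linarith [min_le_left q.1 (min q.2.1 q.2.2)]
  have m2 : 2 * m ≤ q.2.1 := by
    rw [hmdef]; linarith [min_le_right q.1 (min q.2.1 q.2.2), min_le_left q.2.1 q.2.2]
  have m3 : 2 * m ≤ q.2.2 := by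
    rw [hmdef]; linarith [min_le_right q.1 (min q.2.1 q.2.2), min_le_right q.2.1 q.2.2]
  have hball : ∀ q' ∈ Metric.ball q m, m ≤ q'.1 ∧ m ≤ q'.2.1 ∧ m ≤ q'.2.2 := by
    intro q' hq'
    rw [Metric.mem_ball, Prod.dist_eq, Prod.dist_eq, max_lt_iff, max_lt_iff] at hq'
    obtain ⟨a1, a2, a3⟩ := hq'
    rw [Real.dist_eq, abs_lt] at a1 a2 a3
    refine ⟨by linarith, by linarith, by linarith⟩
  unfold Kint
  refine hasFDerivAt_integral_of_dominated_of_fderiv_le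
    (bound := fun s => (a + b + c) * (s + m) ^ ((k:ℝ) - (a + b + c + 1)))
    (Metric.ball_mem_nhds q hm) ?_ ?_ ?_ ?_ ?_ ?_
  · exact Filter.Eventually.of_forall fun q' => (ker_meas ..).aestronglyMeasurable
  · exact ker_int ha hb hc h1 h2 h3 h
  · apply Measurable.aestronglyMeasurable
    unfold kerD
    have := ker_meas k (a+1) b c q.1 q.2.1 q.2.2
    have := ker_meas k a (b+1) c q.1 q.2.1 q.2.2
    have := ker_meas k a b (c+1) q.1 q.2.1 q.2.2
    refine ((Measurable.smul_const (by fun_prop) _).add (Measurable.smul_const (by fun_prop) _)).add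
      (Measurable.smul_const (by fun_prop) _)
  · refine (ae_restrict_iff' measurableSet_Ioi).2 (Filter.Eventually.of_forall ?_)
    intro s hs q' hq'
    have hs : 0 < s := hs
    obtain ⟨b1, b2, b3⟩ := hball q' hq'
    have e1 := ker_le (k := k) (a := a+1) (b := b) (c := c) (by linarith) hb hc hm b1 b2 b3 hs
    have e2 := ker_le (k := k) (a := a) (b := b+1) (c := c) ha (by linarith) hc hm b1 b2 b3 hs
    have e3 := ker_le (k := k) (a := a) (b := b) (c := c+1) ha hb (by linarith) hm b1 b2 b3 hs
    have n1 := ker_nonneg (k := k) (a := a+1) (b := b) (c := c) (hm.trans_le b1) (hm.trans_le b2) (hm.trans_le b3) hs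
    have n2 := ker_nonneg (k := k) (a := a) (b := b+1) (c := c) (hm.trans_le b1) (hm.trans_le b2) (hm.trans_le b3) hs
    have n3 := ker_nonneg (k := k) (a := a) (b := b) (c := c+1) (hm.trans_le b1) (hm.trans_le b2) (hm.trans_le b3) hs
    rw [show a + 1 + b + c = a + b + c + 1 by ring] at e1
    rw [show a + (b + 1) + c = a + b + c + 1 by ring] at e2
    rw [show a + b + (c + 1) = a + b + c + 1 by ring] at e3
    refine ContinuousLinearMap.opNorm_le_bound _ (by positivity) ?_
    intro v
    have v1 : |v.1| ≤ ‖v‖ := by simpa using norm_fst_le v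
    have v2 : |v.2.1| ≤ ‖v‖ := by simpa using (norm_fst_le v.2).trans (norm_snd_le v)
    have v3 : |v.2.2| ≤ ‖v‖ := by simpa using (norm_snd_le v.2).trans (norm_snd_le v)
    simp only [kerD, add_apply, smul_apply,
      ContinuousLinearMap.comp_apply, ContinuousLinearMap.coe_fst', ContinuousLinearMap.coe_snd', smul_eq_mul]
    set B := (s + m) ^ ((k:ℝ) - (a + b + c + 1)) with hBdef
    have key : ∀ (a t u : ℝ), 0 ≤ a → 0 ≤ t → t ≤ B → |u| ≤ ‖v‖ →
        |-a * t * u| ≤ a * B * ‖v‖ := by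
      intro a t u ha ht htB hu
      rw [abs_mul, abs_mul, abs_neg, abs_of_nonneg ha, abs_of_nonneg ht]
      gcongr
    have k1 := key a _ v.1 ha n1 e1 v1
    have k2 := key b _ v.2.1 hb n2 e2 v2
    have k3 := key c _ v.2.2 hc n3 e3 v3
    rw [Real.norm_eq_abs]
    refine (abs_add_three _ _ _).trans ?_
    linarith
  · exact (bound_int (by linarith) hm).const_mul _
  · refine (ae_restrict_iff' measurableSet_Ioi).2 (Filter.Eventually.of_forall ?_)
    intro s hs q' hq'
    have hs : 0 < s := hs
    obtain ⟨b1, b2, b3⟩ := hball q' hq'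
    exact ker_hasF k a b c s q' (by linarith) (by linarith) (by linarith)

open ContinuousLinearMap in
lemma Kint_hasF' {k : ℕ} {a b c : ℝ} (ha : 0 ≤ a) (hb : 0 ≤ b) (hc : 0 ≤ c)
    (h : (k:ℝ) + 1 < a + b + c) (q : ℝ × ℝ × ℝ) (h1 : 0 < q.1) (h2 : 0 < q.2.1)
    (h3 : 0 < q.2.2) :
    HasFDerivAt (fun q : ℝ × ℝ × ℝ => Kint k a b c q.1 q.2.1 q.2.2)
      ((-a * Kint k (a+1) b c q.1 q.2.1 q.2.2) • fst ℝ ℝ (ℝ × ℝ)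
    + (-b * Kint k a (b+1) c q.1 q.2.1 q.2.2) • (fst ℝ ℝ ℝ).comp (snd ℝ ℝ (ℝ × ℝ))
    + (-c * Kint k a b (c+1) q.1 q.2.1 q.2.2) • (snd ℝ ℝ ℝ).comp (snd ℝ ℝ (ℝ × ℝ))) q := by
  convert Kint_hasF ha hb hc h q h1 h2 h3 using 1
  unfold kerD
  have i1 : IntegrableOn (fun s => -a * ker k (a+1) b c q.1 q.2.1 q.2.2 s) (Set.Ioi 0) :=
    (ker_int (by linarith) hb hc h1 h2 h3 (by linarith)).const_mul _
  have i2 : IntegrableOn (fun s => -b * ker k a (b+1) c q.1 q.2.1 q.2.2 s) (Set.Ioi 0) :=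
    (ker_int ha (by linarith) hc h1 h2 h3 (by linarith)).const_mul _
  have i3 : IntegrableOn (fun s => -c * ker k a b (c+1) q.1 q.2.1 q.2.2 s) (Set.Ioi 0) :=
    (ker_int ha hb (by linarith) h1 h2 h3 (by linarith)).const_mul _
  rw [integral_add ((i1.smul_const _).add (i2.smul_const _)) (i3.smul_const _),
    integral_add (i1.smul_const _) (i2.smul_const _), integral_smul_const, integral_smul_const,
    integral_smul_const, integral_const_mul, integral_const_mul, integral_const_mul]
  rfl

lemma Kint_hasDeriv {k : ℕ} {a b c : ℝ} (ha : 0 ≤ a) (hb : 0 ≤ b) (hc : 0 ≤ c)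
    (h : (k:ℝ) + 1 < a + b + c) {X Y Z : ℝ → ℝ} {X' Y' Z' t : ℝ}
    (hX : HasDerivAt X X' t) (hY : HasDerivAt Y Y' t) (hZ : HasDerivAt Z Z' t)
    (h1 : 0 < X t) (h2 : 0 < Y t) (h3 : 0 < Z t) :
    HasDerivAt (fun t => Kint k a b c (X t) (Y t) (Z t))
      (-a * Kint k (a+1) b c (X t) (Y t) (Z t) * X' + -b * Kint k a (b+1) c (X t) (Y t) (Z t) * Y'
        + -c * Kint k a b (c+1) (X t) (Y t) (Z t) * Z') t := by
  have := (Kint_hasF' ha hb hc h (X t, Y t, Z t) h1 h2 h3).comp_hasDerivAt t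
    (hX.prodMk (hY.prodMk hZ))
  refine HasDerivAt.congr_deriv this ?_
  simp

lemma Kint_cont {k : ℕ} {a b c : ℝ} (ha : 0 ≤ a) (hb : 0 ≤ b) (hc : 0 ≤ c)
    (h : (k:ℝ) + 1 < a + b + c) (q : ℝ × ℝ × ℝ) (h1 : 0 < q.1) (h2 : 0 < q.2.1)
    (h3 : 0 < q.2.2) :
    ContinuousAt (fun q : ℝ × ℝ × ℝ => Kint k a b c q.1 q.2.1 q.2.2) q :=
  (Kint_hasF ha hb hc h q h1 h2 h3).continuousAt

end

section
open Real MeasureTheory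

def Mq (n1 n2 n3 v1 v3 : ℝ) : ℝ :=
  2 * n2 * (v1^2 + v3^2 + (v1+v3)^2) - 2 * (n1^2*v1^2 + n2^2*(v1+v3)^2 + n3^2*v3^2)
    - (n1*v1 - n2*(v1+v3) + n3*v3)^2 + 3*(n1+n3-n2-n1*n3)*(v1-v3)^2

lemma quad_pos {E C D e d : ℝ} (hE : 0 < E) (h : 0 < E * D - C^2) (hne : e ≠ 0 ∨ d ≠ 0) :
    0 < E * e^2 + 2 * C * e * d + D * d^2 := by
  have h1 : 0 < E * (E * e^2 + 2 * C * e * d + D * d^2) := by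
    have : E * (E * e^2 + 2 * C * e * d + D * d^2) = (E*e + C*d)^2 + (E*D-C^2)*d^2 := by ring
    rw [this]
    by_cases hd : d = 0
    · subst hd
      have he : e ≠ 0 := by simpa using hne
      have : 0 < (E*e)^2 := by positivity
      nlinarith
    · have : 0 < (E*D-C^2)*d^2 := by positivity
      nlinarith [sq_nonneg (E*e+C*d)]
  exact pos_of_mul_pos_right (by linarith) hE.le

lemma ed_ne {v1 v3 : ℝ} (hv : v1 ≠ 0 ∨ v3 ≠ 0) : (v1+v3)/2 ≠ 0 ∨ (v1-v3)/2 ≠ 0 := by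
  by_contra! h
  rcases hv with h' | h' <;> apply h' <;> linarith [h.1, h.2]

lemma Mq_nnn {n v1 v3 : ℝ} (h0 : 0 < n) (h1 : n < 1) (hv : v1 ≠ 0 ∨ v3 ≠ 0) :
    0 < Mq n n n v1 v3 := by
  have : Mq n n n v1 v3 = n*(1-n)*(2*(v1^2+v3^2+(v1+v3)^2) + 3*(v1-v3)^2) := by unfold Mq; ring
  rw [this]
  have h2 : 0 < 1 - n := by linarith
  have : 0 < v1^2+v3^2 := by rcases hv with h | h <;> positivity
  positivity

lemma Mq_0nn {n v1 v3 : ℝ} (h0 : 0 < n) (h1 : n < 1) (hv : v1 ≠ 0 ∨ v3 ≠ 0) :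
    0 < Mq 0 n n v1 v3 := by
  have := quad_pos (E := 12*n-11*n^2) (C := n^2) (D := 4*n-3*n^2)
    (by nlinarith) (by
      have : (12*n-11*n^2)*(4*n-3*n^2) - (n^2)^2 = 16*n^2*(1-n)*(3-2*n) := by ring
      rw [this]
      have h2 : 0 < 1 - n := by linarith
      have h3 : 0 < 3 - 2*n := by linarith
      positivity) (ed_ne hv)
  convert this using 1
  unfold Mq; ring

lemma Mq_0nN {n v1 v3 : ℝ} (h0 : 0 < n) (h1 : n < 1) (hv : v1 ≠ 0 ∨ v3 ≠ 0) :
    0 < Mq 0 n (9*n/(1+8*n)) v1 v3 := by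
  have h2 : 0 < 1 - n := by linarith
  have hE : 0 < 12-27*n+864*n^2-768*n^3 := by
    nlinarith [mul_pos (mul_pos h0 h0) h2, sq_nonneg (n-1/8)]
  have := quad_pos (E := 12-27*n+864*n^2-768*n^3) (C := 9*n*(25-16*n)) (D := 100+493*n-512*n^2)
    hE (by
      have : (12-27*n+864*n^2-768*n^3)*(100+493*n-512*n^2) - (9*n*(25-16*n))^2 =
        (1-n)*(1200+4416*n+20736*n^2+55296*n^3 + 393216*n^3*(1-n)) := by ring
      rw [this]
      positivity) (ed_ne hv)
  have e : Mq 0 n (9*n/(1+8*n)) v1 v3 = n/(1+8*n)^2 *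
    ((12-27*n+864*n^2-768*n^3) * ((v1+v3)/2)^2 + 2 * (9*n*(25-16*n)) * ((v1+v3)/2) * ((v1-v3)/2) +
      (100+493*n-512*n^2) * ((v1-v3)/2)^2) := by
    have : 1+8*n ≠ 0 := by positivity
    unfold Mq; field_simp; ring
  rw [e]
  have : 0 < n/(1+8*n)^2 := by positivity
  positivity

lemma Mq_nnN {n v1 v3 : ℝ} (h0 : 0 < n) (h1 : n < 1) (hv : v1 ≠ 0 ∨ v3 ≠ 0) :
    0 < Mq n n (9*n/(1+8*n)) v1 v3 := by
  have h2 : 0 < 1 - n := by linarith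
  have hE : 0 < 12-32*n+704*n^2 := by
    nlinarith [sq_nonneg (n-1/8)]
  have := quad_pos (E := 12-32*n+704*n^2) (C := 8*n*(28+8*n)) (D := 112+704*n+192*n^2)
    hE (by
      have : (12-32*n+704*n^2)*(112+704*n+192*n^2) - (8*n*(28+8*n))^2 =
        1344+4864*n+8448*n^2+460800*n^3+131072*n^4 := by ring
      rw [this]
      positivity) (ed_ne hv)
  have e : Mq n n (9*n/(1+8*n)) v1 v3 = n*(1-n)/(1+8*n)^2 *
    ((12-32*n+704*n^2) * ((v1+v3)/2)^2 + 2 * (8*n*(28+8*n)) * ((v1+v3)/2) * ((v1-v3)/2) +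
      (112+704*n+192*n^2) * ((v1-v3)/2)^2) := by
    have : 1+8*n ≠ 0 := by positivity
    unfold Mq; field_simp; ring
  rw [e]
  have : 0 < n*(1-n)/(1+8*n)^2 := by positivity
  positivity

lemma conv_pos {l a b c : ℝ} (h0 : 0 ≤ l) (h1 : l ≤ 1) (ha : 0 < a) (hb : 0 < b) (hc : 0 ≤ c) :
    0 < (1-l)*a + l*b + l*(1-l)*c := by
  have h2 : 0 ≤ 1 - l := by linarith
  have : 0 ≤ l*(1-l)*c := by positivity
  rcases h0.eq_or_lt with h | h
  · subst h; simpa using ha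
  · nlinarith [mul_pos h hb, mul_nonneg h2 ha.le]

lemma Mq_n1 {n1 n2 n3 v1 v3 : ℝ} (h0 : 0 < n2) (ha : 0 ≤ n1) (hb : n1 ≤ n2)
    (p0 : 0 < Mq 0 n2 n3 v1 v3) (p1 : 0 < Mq n2 n2 n3 v1 v3) : 0 < Mq n1 n2 n3 v1 v3 := by
  have hl : n1 = (n1/n2) * n2 := by field_simp
  have l0 : 0 ≤ n1/n2 := by positivity
  have l1 : n1/n2 ≤ 1 := by rw [div_le_one h0]; exact hb
  generalize n1/n2 = l at *
  subst hl
  have := conv_pos l0 l1 p0 p1 (c := 3*n2^2*v1^2) (by positivity)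
  convert this using 1
  unfold Mq; ring

lemma Mq_n3 {n1 n2 n3 N v1 v3 : ℝ} (ha : n2 ≤ n3) (hb : n3 ≤ N)
    (p0 : 0 < Mq n1 n2 n2 v1 v3) (p1 : 0 < Mq n1 n2 N v1 v3) : 0 < Mq n1 n2 n3 v1 v3 := by
  rcases (ha.trans hb).eq_or_lt with h | h
  · have : n3 = n2 := by linarith
    rw [this]; exact p0
  have h0 : 0 < N - n2 := by linarith
  have hl : n3 = n2 + ((n3-n2)/(N-n2)) * (N-n2) := by field_simp; ring
  have l0 : 0 ≤ (n3-n2)/(N-n2) := div_nonneg (by linarith) h0.le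
  have l1 : (n3-n2)/(N-n2) ≤ 1 := by rw [div_le_one h0]; linarith
  generalize (n3-n2)/(N-n2) = l at *
  subst hl
  have := conv_pos l0 l1 p0 p1 (c := 3*(N-n2)^2*v3^2) (by positivity)
  convert this using 1
  unfold Mq; ring

lemma Mq_pos {n1 n2 n3 v1 v3 : ℝ} (h0 : 0 < n2) (h1 : n2 < 1) (ha : 0 ≤ n1) (hb : n1 ≤ n2)
    (hc : n2 ≤ n3) (hd : n3 ≤ 9*n2/(1+8*n2)) (hv : v1 ≠ 0 ∨ v3 ≠ 0) :
    0 < Mq n1 n2 n3 v1 v3 :=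
  Mq_n1 h0 ha hb (Mq_n3 hc hd (Mq_0nn h0 h1 hv) (Mq_0nN h0 h1 hv))
    (Mq_n3 hc hd (Mq_nnn h0 h1 hv) (Mq_nnN h0 h1 hv))

/-- in terms of the semi-axes: n_i = s/(s+B_i) -/
lemma Mq_pos' {s X Y Z v1 v3 : ℝ} (hs : 0 < s) (hZ : 0 < Z) (hYZ : Z < Y) (hXY : Y < X)
    (h9 : Y ≤ 9 * Z) (hv : v1 ≠ 0 ∨ v3 ≠ 0) :
    0 < Mq (s/(s+X)) (s/(s+Y)) (s/(s+Z)) v1 v3 := by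
  have hY : 0 < Y := hZ.trans hYZ
  have hX : 0 < X := hY.trans hXY
  apply Mq_pos _ _ _ _ _ _ hv
  · positivity
  · rw [div_lt_one (by positivity)]; linarith
  · positivity
  · gcongr
  · gcongr
  · have : 9*(s/(s+Y))/(1+8*(s/(s+Y))) = 9*s/(9*s+Y) := by field_simp; ring
    rw [this, div_le_div_iff₀ (by positivity) (by positivity)]
    nlinarith

end

section
open Real MeasureTheory

lemma rpow_32 {t : ℝ} (ht : 0 < t) : t ^ (-(3/2:ℝ)) = t ^ (-(1/2:ℝ)) / t := by
  rw [show (-(3/2:ℝ)) = -(1/2) - 1 by norm_num, Real.rpow_sub_one ht.ne']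

lemma rpow_52 {t : ℝ} (ht : 0 < t) : t ^ (-(5/2:ℝ)) = t ^ (-(1/2:ℝ)) / t ^ 2 := by
  rw [show (-(5/2:ℝ)) = -(1/2) - 1 - 1 by norm_num, Real.rpow_sub_one ht.ne',
    Real.rpow_sub_one ht.ne']
  field_simp

lemma poly0 {x Y s : ℝ} (h9 : 9 ≤ Y) (hx : Y ≤ x) (hs : 0 < s) :
    (x - Y) / (x*Y) * (4*x^2*Y + 3*s - s^2) ≤ (x^2*Y - x^2 + Y - x*Y) - (x-Y)*s := by
  have hxp : 0 < x := by linarith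
  have hYp : 0 < Y := by linarith
  rw [div_mul_eq_mul_div, div_le_iff₀ (by positivity)]
  -- lam0 = (Y-1)x - 1
  have h1 : (x-Y)*((Y-1)*x-1) ≤ x^2*Y - x^2 + Y - x*Y := by
    nlinarith [mul_nonneg (mul_pos hxp hYp).le (by linarith : 0 ≤ Y-2)]
  have h2 : 4*x^2*Y + 3*s - s^2 ≤ (((Y-1)*x-1) - s) * (x*Y) := by
    have d : 0 ≤ 3*x^2*Y^2 - 20*x^2*Y - 10*x*Y - 9 := by
      have a1 : 27*(x^2*Y) ≤ 3*x^2*Y^2 := by nlinarith [mul_pos (pow_pos hxp 2) hYp]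
      have a2 : 9 * (x*Y) ≤ x^2*Y := by nlinarith [mul_pos hxp hYp]
      have a3 : 81 ≤ x*Y := by nlinarith
      linarith
    nlinarith [sq_nonneg (2*s - (x*Y+3))]
  have h3 : 0 ≤ x - Y := by linarith
  have h4 := mul_le_mul_of_nonneg_left h2 h3
  have h5 := mul_le_mul_of_nonneg_right h1 (by positivity : 0 ≤ x*Y)
  nlinarith

lemma poly1 {x Y z s : ℝ} (hz : 0 < z) (h9 : 9*z^2 ≤ Y) (hx : Y ≤ x*z) (hs : 0 < s) :
    (x*z - Y) * z / (x*Y) * (4*x^2*Y + 3*z^2*s - s^2) ≤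
      (x^2*Y - x^2*z^2 + Y*z^2 - x*Y*z) - (x*z-Y)*s := by
  have hYp : 0 < Y := by nlinarith [pow_pos hz 2]
  have hxp : 0 < x := by
    by_contra h
    nlinarith
  obtain ⟨p, rfl⟩ : ∃ p, x = z*p := ⟨x/z, by field_simp⟩
  obtain ⟨q, rfl⟩ : ∃ q, Y = z^2*q := ⟨Y/z^2, by field_simp⟩
  obtain ⟨σ, rfl⟩ : ∃ σ, s = z^2*σ := ⟨s/z^2, by field_simp⟩
  have hz2 : 0 < z^2 := by positivity
  have hq : 9 ≤ q := by nlinarith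
  have hp : q ≤ p := by nlinarith
  have hσ : 0 < σ := by
    by_contra h
    nlinarith
  have hq0 : 0 < q := by linarith
  have hp0 : 0 < p := by linarith
  have := poly0 hq hp hσ
  have h2 := mul_le_mul_of_nonneg_left this (by positivity : 0 ≤ z^4)
  calc _ = z ^ 4 * ((p - q) / (p * q) * (4 * p ^ 2 * q + 3 * σ - σ ^ 2)) := by field_simp
    _ ≤ _ := h2
    _ = _ := by ring

lemma Gle {X Y Z s : ℝ} (hZ : 0 < Z) (hYZ : Z < Y) (hXY : Y < X) (hs : 0 < s) :
    2 * ((s+X)*(s+Y)*(2 - s/(2*(s+X)) - s/(2*(s+Y)) - 3*s/(2*(s+Z)))) ≤ 4*X*Y + 3*Z*s - s^2 := by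
  have hY : 0 < Y := hZ.trans hYZ
  have hX : 0 < X := hY.trans hXY
  have e : 4*X*Y + 3*Z*s - s^2 - 2 * ((s+X)*(s+Y)*(2 - s/(2*(s+X)) - s/(2*(s+Y)) - 3*s/(2*(s+Z))))
     = 3*s*(Y-Z)*((X-Z)/(s+Z)) := by
    field_simp; ring
  have : 0 ≤ 3*s*(Y-Z)*((X-Z)/(s+Z)) := by
    have a1 : 0 < Y - Z := by linarith
    have a2 : 0 < X - Z := by linarith
    positivity
  linarith

lemma F_int0 {X Y Z : ℝ} (hX : 0 < X) (hY : 0 < Y) (hZ : 0 < Z) :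
    IntegrableOn (fun s => 2 * ker 1 (1/2) (1/2) (3/2) X Y Z s - 1/2 * ker 2 (3/2) (1/2) (3/2) X Y Z s
      - 1/2 * ker 2 (1/2) (3/2) (3/2) X Y Z s - 3/2 * ker 2 (1/2) (1/2) (5/2) X Y Z s) (Set.Ioi 0) ∧
    ∫ s in Set.Ioi (0:ℝ), (2 * ker 1 (1/2) (1/2) (3/2) X Y Z s - 1/2 * ker 2 (3/2) (1/2) (3/2) X Y Z s
      - 1/2 * ker 2 (1/2) (3/2) (3/2) X Y Z s - 3/2 * ker 2 (1/2) (1/2) (5/2) X Y Z s) = 0 := by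
  have hi : IntegrableOn (fun s => 2 * ker 1 (1/2) (1/2) (3/2) X Y Z s - 1/2 * ker 2 (3/2) (1/2) (3/2) X Y Z s
      - 1/2 * ker 2 (1/2) (3/2) (3/2) X Y Z s - 3/2 * ker 2 (1/2) (1/2) (5/2) X Y Z s) (Set.Ioi 0) := by
    refine ((((ker_int ?_ ?_ ?_ hX hY hZ ?_).const_mul _).sub ((ker_int ?_ ?_ ?_ hX hY hZ ?_).const_mul _)).sub
      ((ker_int ?_ ?_ ?_ hX hY hZ ?_).const_mul _)).sub ((ker_int ?_ ?_ ?_ hX hY hZ ?_).const_mul _) <;> norm_num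
  refine ⟨hi, ?_⟩
  have h0 : ker 2 (1/2) (1/2) (3/2) X Y Z 0 = 0 := by simp [ker]
  have := integral_Ioi_of_hasDerivAt_of_tendsto' (a := 0) (m := 0)
    (f := ker 2 (1/2) (1/2) (3/2) X Y Z) ?_ hi ?_
  · rw [this, h0]; simp
  · intro s hs
    have hs : 0 ≤ s := hs
    have p1 : 0 < s + X := by linarith
    have p2 : 0 < s + Y := by linarith
    have p3 : 0 < s + Z := by linarith
    have g1 := ((hasDerivAt_id s).add_const X).rpow_const (p := -(1/2)) (Or.inl p1.ne')
    have g2 := ((hasDerivAt_id s).add_const Y).rpow_const (p := -(1/2)) (Or.inl p2.ne')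
    have g3 := ((hasDerivAt_id s).add_const Z).rpow_const (p := -(3/2)) (Or.inl p3.ne')
    have := ((hasDerivAt_id s).pow 2).mul ((g1.mul g2).mul g3)
    refine HasDerivAt.congr_deriv this ?_
    simp only [ker, id, Pi.mul_apply, Pi.pow_apply]
    norm_num
    ring
  · have hm : 0 < min X (min Y Z) := by positivity
    have lim : Filter.Tendsto (fun s : ℝ => (s + min X (min Y Z)) ^ (-(1/2:ℝ))) Filter.atTop (nhds 0) :=
      (tendsto_rpow_neg_atTop (by norm_num)).comp (Filter.tendsto_atTop_add_const_right _ _ Filter.tendsto_id)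
    refine squeeze_zero' ?_ ?_ lim
    · filter_upwards [Filter.eventually_gt_atTop 0] with s hs using ker_nonneg hX hY hZ hs
    · filter_upwards [Filter.eventually_gt_atTop 0] with s hs
      have := ker_le (k := 2) (a := 1/2) (b := 1/2) (c := 3/2) (by norm_num) (by norm_num) (by norm_num) hm
        (min_le_left X _) ((min_le_right _ _).trans (min_le_left Y Z))
        ((min_le_right _ _).trans (min_le_right Y Z)) hs
      norm_num at this ⊢
      exact this

lemma Q_nonpos {x y z : ℝ} (hz : 0 < z) (hyz : z < y) (hxy : y < x) (h9 : 9*z^2 ≤ y^2) :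
    0 ≤ (x^2*y^2 - x^2*z^2 + y^2*z^2 - x*y^2*z) * Kint 1 (3/2) (3/2) (3/2) (x^2) (y^2) (z^2)
      + (y^2 - x*z) * Kint 2 (3/2) (3/2) (3/2) (x^2) (y^2) (z^2) := by
  have hy : 0 < y := hz.trans hyz
  have hx : 0 < x := hy.trans hxy
  have hX : 0 < x^2 := by positivity
  have hY : 0 < y^2 := by positivity
  have hZ : 0 < z^2 := by positivity
  have hYZ : z^2 < y^2 := by gcongr
  have hXY : y^2 < x^2 := by gcongr
  have i1 : IntegrableOn (ker 1 (3/2) (3/2) (3/2) (x^2) (y^2) (z^2)) (Set.Ioi 0) :=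
    ker_int (by norm_num) (by norm_num) (by norm_num) hX hY hZ (by norm_num)
  have i2 : IntegrableOn (ker 2 (3/2) (3/2) (3/2) (x^2) (y^2) (z^2)) (Set.Ioi 0) :=
    ker_int (by norm_num) (by norm_num) (by norm_num) hX hY hZ (by norm_num)
  rcases le_or_gt (x*z) (y^2) with hc | hc
  · have a1 : 0 ≤ Kint 1 (3/2) (3/2) (3/2) (x^2) (y^2) (z^2) :=
      setIntegral_nonneg measurableSet_Ioi fun s hs => ker_nonneg hX hY hZ hs
    have a2 : 0 ≤ Kint 2 (3/2) (3/2) (3/2) (x^2) (y^2) (z^2) :=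
      setIntegral_nonneg measurableSet_Ioi fun s hs => ker_nonneg hX hY hZ hs
    have a3 : 0 ≤ x^2*y^2 - x^2*z^2 + y^2*z^2 - x*y^2*z := by
      nlinarith [mul_nonneg hX.le (sub_nonneg.2 hYZ.le), mul_pos hx hz, mul_pos hX hZ, mul_pos hX hY,
        mul_nonneg hY.le (sq_nonneg (x-z)), mul_nonneg (mul_pos hx hz).le (sub_nonneg.2 hc)]
    have a4 : 0 ≤ y^2 - x*z := by linarith
    positivity
  · obtain ⟨fi, f0⟩ := F_int0 hX hY hZ
    set η := 2 * ((x*z - y^2) * z / (x*y^2)) with hη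
    have : (∫ s in Set.Ioi (0:ℝ), η * (2 * ker 1 (1/2) (1/2) (3/2) (x^2) (y^2) (z^2) s - 1/2 * ker 2 (3/2) (1/2) (3/2) (x^2) (y^2) (z^2) s
      - 1/2 * ker 2 (1/2) (3/2) (3/2) (x^2) (y^2) (z^2) s - 3/2 * ker 2 (1/2) (1/2) (5/2) (x^2) (y^2) (z^2) s)) ≤
      ∫ s in Set.Ioi (0:ℝ), ((x^2*y^2 - x^2*z^2 + y^2*z^2 - x*y^2*z) * ker 1 (3/2) (3/2) (3/2) (x^2) (y^2) (z^2) s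
      + (y^2 - x*z) * ker 2 (3/2) (3/2) (3/2) (x^2) (y^2) (z^2) s) := by
      refine setIntegral_mono_on (fi.const_mul _) ((i1.const_mul _).add (i2.const_mul _)) measurableSet_Ioi ?_
      intro s hs
      have hs : 0 < s := hs
      have p1 : 0 < s + x^2 := by linarith
      have p2 : 0 < s + y^2 := by linarith
      have p3 : 0 < s + z^2 := by linarith
      simp only [ker, rpow_32 p1, rpow_32 p2, rpow_32 p3, rpow_52 p3]
      have hw1 : 0 < (s + x^2)^(-(1/2:ℝ)) := by positivity
      have hw2 : 0 < (s + y^2)^(-(1/2:ℝ)) := by positivity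
      have hw3 : 0 < (s + z^2)^(-(1/2:ℝ)) := by positivity
      generalize (s + x^2)^(-(1/2:ℝ)) = w1 at *
      generalize (s + y^2)^(-(1/2:ℝ)) = w2 at *
      generalize (s + z^2)^(-(1/2:ℝ)) = w3 at *
      have g := Gle (X := x^2) (Y := y^2) (Z := z^2) (s := s) hZ hYZ hXY hs
      have q := poly1 (x := x) (Y := y^2) (z := z) (s := s) hz h9 hc.le hs
      have hη0 : 0 ≤ (x*z - y^2) * z / (x*y^2) := by
        have : 0 < x*z-y^2 := by linarith
        positivity
      have g2 := (mul_le_mul_of_nonneg_left g hη0).trans q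
      have hw : 0 ≤ s * (w1*w2*w3) / ((s+x^2)*(s+y^2)*(s+z^2)) := by positivity
      have g3 := mul_le_mul_of_nonneg_left g2 hw
      convert g3 using 1
      · rw [hη]; field_simp
      · field_simp; ring
    rw [integral_const_mul, f0, mul_zero, integral_add (i1.const_mul _) (i2.const_mul _),
      integral_const_mul, integral_const_mul] at this
    exact this

end

section
open Real MeasureTheory

noncomputable def Pot (P Q κ ξ η ζ : ℝ) : ℝ :=
  P/4/(ξ-ζ)^2 + Q/4/(ξ+ζ)^2 - κ * Kint 0 (1/2) (1/2) (1/2) (ξ^2) (η^2) (ζ^2)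

noncomputable def PotD (P Q κ ξ η ζ v1 v2 v3 : ℝ) : ℝ :=
  -(P/2)*(v1*ξ-v3*ζ)/(ξ-ζ)^3 - Q/2*(v1*ξ+v3*ζ)/(ξ+ζ)^3
   + κ * (v1*(ξ^2*Kint 0 (3/2) (1/2) (1/2) (ξ^2) (η^2) (ζ^2))
    + v2*(η^2*Kint 0 (1/2) (3/2) (1/2) (ξ^2) (η^2) (ζ^2))
    + v3*(ζ^2*Kint 0 (1/2) (1/2) (3/2) (ξ^2) (η^2) (ζ^2)))

noncomputable def PotDD (P Q κ ξ η ζ v1 v2 v3 : ℝ) : ℝ :=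
  -(P/2)*((v1^2*ξ-v3^2*ζ)/(ξ-ζ)^3 - 3*(v1*ξ-v3*ζ)^2/(ξ-ζ)^4)
  - Q/2*((v1^2*ξ+v3^2*ζ)/(ξ+ζ)^3 - 3*(v1*ξ+v3*ζ)^2/(ξ+ζ)^4)
   + κ * (2*v1^2*(ξ^2*Kint 0 (3/2) (1/2) (1/2) (ξ^2) (η^2) (ζ^2))
    + 2*v2^2*(η^2*Kint 0 (1/2) (3/2) (1/2) (ξ^2) (η^2) (ζ^2))
    + 2*v3^2*(ζ^2*Kint 0 (1/2) (1/2) (3/2) (ξ^2) (η^2) (ζ^2))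
    - 3*v1^2*(ξ^4*Kint 0 (5/2) (1/2) (1/2) (ξ^2) (η^2) (ζ^2))
    - 3*v2^2*(η^4*Kint 0 (1/2) (5/2) (1/2) (ξ^2) (η^2) (ζ^2))
    - 3*v3^2*(ζ^4*Kint 0 (1/2) (1/2) (5/2) (ξ^2) (η^2) (ζ^2))
    - 2*v1*v2*(ξ^2*η^2*Kint 0 (3/2) (3/2) (1/2) (ξ^2) (η^2) (ζ^2))
    - 2*v1*v3*(ξ^2*ζ^2*Kint 0 (3/2) (1/2) (3/2) (ξ^2) (η^2) (ζ^2))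
    - 2*v2*v3*(η^2*ζ^2*Kint 0 (1/2) (3/2) (3/2) (ξ^2) (η^2) (ζ^2)))

lemma half1 : (1/2:ℝ)+1 = 3/2 := by norm_num
lemma half3 : (3/2:ℝ)+1 = 5/2 := by norm_num

lemma sq_deriv {ξ : ℝ → ℝ} {t v : ℝ} (h : HasDerivAt ξ (v*ξ t) t) :
    HasDerivAt (fun t => ξ t^2) (2*v*ξ t^2) t := by
  refine (h.pow 2).congr_deriv ?_
  simp; ring

lemma Pot_deriv {P Q κ v1 v2 v3 t : ℝ} {ξ η ζ : ℝ → ℝ}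
    (h1 : HasDerivAt ξ (v1*ξ t) t) (h2 : HasDerivAt η (v2*η t) t) (h3 : HasDerivAt ζ (v3*ζ t) t)
    (p1 : 0 < ξ t) (p2 : 0 < η t) (p3 : 0 < ζ t) (p4 : 0 < ξ t - ζ t) :
    HasDerivAt (fun t => Pot P Q κ (ξ t) (η t) (ζ t)) (PotD P Q κ (ξ t) (η t) (ζ t) v1 v2 v3) t := by
  have p5 : 0 < ξ t + ζ t := by linarith
  have k := Kint_hasDeriv (k := 0) (a := 1/2) (b := 1/2) (c := 1/2) (by norm_num) (by norm_num)
    (by norm_num) (by norm_num) (sq_deriv h1) (sq_deriv h2) (sq_deriv h3) (by positivity)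
    (by positivity) (by positivity)
  rw [half1] at k
  have q1 := (hasDerivAt_const t (P/4)).div ((h1.sub h3).pow 2) (by simp; positivity)
  have q2 := (hasDerivAt_const t (Q/4)).div ((h1.add h3).pow 2) (by simp; positivity)
  refine ((q1.add q2).sub (k.const_mul κ)).congr_deriv ?_
  simp only [PotD, Pi.sub_apply, Pi.add_apply, Pi.pow_apply]
  generalize Kint 0 (3/2) (1/2) (1/2) (ξ t^2) (η t^2) (ζ t^2) = K1
  generalize Kint 0 (1/2) (3/2) (1/2) (ξ t^2) (η t^2) (ζ t^2) = K2
  generalize Kint 0 (1/2) (1/2) (3/2) (ξ t^2) (η t^2) (ζ t^2) = K3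
  have := p4.ne'
  have := p5.ne'
  generalize ξ t = x at *
  generalize ζ t = z at *
  push_cast
  field_simp
  ring

lemma PotD_deriv {P Q κ v1 v2 v3 t : ℝ} {ξ η ζ : ℝ → ℝ}
    (h1 : HasDerivAt ξ (v1*ξ t) t) (h2 : HasDerivAt η (v2*η t) t) (h3 : HasDerivAt ζ (v3*ζ t) t)
    (p1 : 0 < ξ t) (p2 : 0 < η t) (p3 : 0 < ζ t) (p4 : 0 < ξ t - ζ t) :
    HasDerivAt (fun t => PotD P Q κ (ξ t) (η t) (ζ t) v1 v2 v3)
      (PotDD P Q κ (ξ t) (η t) (ζ t) v1 v2 v3) t := by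
  have p5 : 0 < ξ t + ζ t := by linarith
  have s1 := sq_deriv h1
  have s2 := sq_deriv h2
  have s3 := sq_deriv h3
  have k1 := Kint_hasDeriv (k := 0) (a := 3/2) (b := 1/2) (c := 1/2) (by norm_num) (by norm_num)
    (by norm_num) (by norm_num) s1 s2 s3 (by positivity) (by positivity) (by positivity)
  have k2 := Kint_hasDeriv (k := 0) (a := 1/2) (b := 3/2) (c := 1/2) (by norm_num) (by norm_num)
    (by norm_num) (by norm_num) s1 s2 s3 (by positivity) (by positivity) (by positivity)
  have k3 := Kint_hasDeriv (k := 0) (a := 1/2) (b := 1/2) (c := 3/2) (by norm_num) (by norm_num)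
    (by norm_num) (by norm_num) s1 s2 s3 (by positivity) (by positivity) (by positivity)
  rw [half1, half3] at k1 k2 k3
  have q1 := (((h1.const_mul v1).sub (h3.const_mul v3)).const_mul (-(P/2))).div ((h1.sub h3).pow 3)
    (by simp; positivity)
  have q2 := (((h1.const_mul v1).add (h3.const_mul v3)).const_mul (Q/2)).div ((h1.add h3).pow 3)
    (by simp; positivity)
  have r := ((((s1.mul k1).const_mul v1).add ((s2.mul k2).const_mul v2)).add
    ((s3.mul k3).const_mul v3)).const_mul κ
  refine ((q1.sub q2).add r).congr_deriv ?_
  simp only [PotDD, Pi.sub_apply, Pi.add_apply, Pi.pow_apply]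
  generalize Kint 0 (3/2) (1/2) (1/2) (ξ t^2) (η t^2) (ζ t^2) = K1
  generalize Kint 0 (1/2) (3/2) (1/2) (ξ t^2) (η t^2) (ζ t^2) = K2
  generalize Kint 0 (1/2) (1/2) (3/2) (ξ t^2) (η t^2) (ζ t^2) = K3
  generalize Kint 0 (5/2) (1/2) (1/2) (ξ t^2) (η t^2) (ζ t^2) = K4
  generalize Kint 0 (1/2) (5/2) (1/2) (ξ t^2) (η t^2) (ζ t^2) = K5
  generalize Kint 0 (1/2) (1/2) (5/2) (ξ t^2) (η t^2) (ζ t^2) = K6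
  generalize Kint 0 (3/2) (3/2) (1/2) (ξ t^2) (η t^2) (ζ t^2) = K7
  generalize Kint 0 (3/2) (1/2) (3/2) (ξ t^2) (η t^2) (ζ t^2) = K8
  generalize Kint 0 (1/2) (3/2) (3/2) (ξ t^2) (η t^2) (ζ t^2) = K9
  have := p4.ne'
  have := p5.ne'
  generalize ξ t = x at *
  generalize ζ t = z at *
  generalize η t = y at *
  push_cast
  field_simp
  ring

lemma Kid1 {X Y Z : ℝ} (hX : 0 < X) (hY : 0 < Y) (hZ : 0 < Z) :
    X*Kint 0 (3/2) (1/2) (1/2) X Y Z - Y*Kint 0 (1/2) (3/2) (1/2) X Y Z =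
     (X-Y)*(Kint 2 (3/2) (3/2) (3/2) X Y Z + Z*Kint 1 (3/2) (3/2) (3/2) X Y Z) := by
  have i1 := ker_int (k := 0) (a := 3/2) (b := 1/2) (c := 1/2) (by norm_num) (by norm_num) (by norm_num) hX hY hZ (by norm_num)
  have i2 := ker_int (k := 0) (a := 1/2) (b := 3/2) (c := 1/2) (by norm_num) (by norm_num) (by norm_num) hX hY hZ (by norm_num)
  have i3 := ker_int (k := 2) (a := 3/2) (b := 3/2) (c := 3/2) (by norm_num) (by norm_num) (by norm_num) hX hY hZ (by norm_num)
  have i4 := ker_int (k := 1) (a := 3/2) (b := 3/2) (c := 3/2) (by norm_num) (by norm_num) (by norm_num) hX hY hZ (by norm_num)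
  unfold Kint
  rw [← integral_const_mul, ← integral_const_mul, ← integral_const_mul,
    ← integral_sub (i1.const_mul _) (i2.const_mul _), ← integral_add i3 (i4.const_mul _), ← integral_const_mul]
  refine setIntegral_congr_fun measurableSet_Ioi fun s hs => ?_
  have hs : 0 < s := hs
  have p1 : 0 < s + X := by linarith
  have p2 : 0 < s + Y := by linarith
  have p3 : 0 < s + Z := by linarith
  simp only [ker, rpow_32 p1, rpow_32 p2, rpow_32 p3]
  field_simp
  ring

lemma Kid2 {X Y Z : ℝ} (hX : 0 < X) (hY : 0 < Y) (hZ : 0 < Z) :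
    Y*Kint 0 (1/2) (3/2) (1/2) X Y Z - Z*Kint 0 (1/2) (1/2) (3/2) X Y Z =
     (Y-Z)*(Kint 2 (3/2) (3/2) (3/2) X Y Z + X*Kint 1 (3/2) (3/2) (3/2) X Y Z) := by
  have i1 := ker_int (k := 0) (a := 1/2) (b := 3/2) (c := 1/2) (by norm_num) (by norm_num) (by norm_num) hX hY hZ (by norm_num)
  have i2 := ker_int (k := 0) (a := 1/2) (b := 1/2) (c := 3/2) (by norm_num) (by norm_num) (by norm_num) hX hY hZ (by norm_num)
  have i3 := ker_int (k := 2) (a := 3/2) (b := 3/2) (c := 3/2) (by norm_num) (by norm_num) (by norm_num) hX hY hZ (by norm_num)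
  have i4 := ker_int (k := 1) (a := 3/2) (b := 3/2) (c := 3/2) (by norm_num) (by norm_num) (by norm_num) hX hY hZ (by norm_num)
  unfold Kint
  rw [← integral_const_mul, ← integral_const_mul, ← integral_const_mul,
    ← integral_sub (i1.const_mul _) (i2.const_mul _), ← integral_add i3 (i4.const_mul _), ← integral_const_mul]
  refine setIntegral_congr_fun measurableSet_Ioi fun s hs => ?_
  have hs : 0 < s := hs
  have p1 : 0 < s + X := by linarith
  have p2 : 0 < s + Y := by linarith
  have p3 : 0 < s + Z := by linarith
  simp only [ker, rpow_32 p1, rpow_32 p2, rpow_32 p3]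
  field_simp
  ring

/-- the linear combination of integrals giving the quadratic form -/
noncomputable def Wq (X Y Z v1 v2 v3 : ℝ) : ℝ :=
  let a := X*Kint 0 (3/2) (1/2) (1/2) X Y Z - Y*Kint 0 (1/2) (3/2) (1/2) X Y Z
  let c := Y*Kint 0 (1/2) (3/2) (1/2) X Y Z - Z*Kint 0 (1/2) (1/2) (3/2) X Y Z
  2*a*v1^2 - 2*c*v3^2 + 3*(a*Z+c*X)/(X-Z)*(v1-v3)^2 +
  (2*v1^2*(X*Kint 0 (3/2) (1/2) (1/2) X Y Z)
    + 2*v2^2*(Y*Kint 0 (1/2) (3/2) (1/2) X Y Z)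
    + 2*v3^2*(Z*Kint 0 (1/2) (1/2) (3/2) X Y Z)
    - 3*v1^2*(X^2*Kint 0 (5/2) (1/2) (1/2) X Y Z)
    - 3*v2^2*(Y^2*Kint 0 (1/2) (5/2) (1/2) X Y Z)
    - 3*v3^2*(Z^2*Kint 0 (1/2) (1/2) (5/2) X Y Z)
    - 2*v1*v2*(X*Y*Kint 0 (3/2) (3/2) (1/2) X Y Z)
    - 2*v1*v3*(X*Z*Kint 0 (3/2) (1/2) (3/2) X Y Z)
    - 2*v2*v3*(Y*Z*Kint 0 (1/2) (3/2) (3/2) X Y Z))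

lemma int3 {f1 f2 f3 : ℝ → ℝ} (c1 c2 c3 : ℝ) (h1 : IntegrableOn f1 (Set.Ioi 0))
    (h2 : IntegrableOn f2 (Set.Ioi 0)) (h3 : IntegrableOn f3 (Set.Ioi 0)) :
    IntegrableOn (fun s => c1*f1 s + c2*f2 s + c3*f3 s) (Set.Ioi 0) ∧
    ∫ s in Set.Ioi (0:ℝ), (c1*f1 s + c2*f2 s + c3*f3 s) = c1*(∫ s in Set.Ioi (0:ℝ), f1 s)
      + c2*(∫ s in Set.Ioi (0:ℝ), f2 s) + c3*(∫ s in Set.Ioi (0:ℝ), f3 s) := by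
  refine ⟨((h1.const_mul _).add (h2.const_mul _)).add (h3.const_mul _), ?_⟩
  have h12 : IntegrableOn (fun s => c1*f1 s + c2*f2 s) (Set.Ioi 0) :=
    (h1.const_mul _).add (h2.const_mul _)
  rw [integral_add h12 (h3.const_mul _),
    integral_add (h1.const_mul _) (h2.const_mul _), integral_const_mul, integral_const_mul,
    integral_const_mul]

lemma Wq_pos {X Y Z v1 v3 : ℝ} (hZ : 0 < Z) (hYZ : Z < Y) (hXY : Y < X) (h9 : Y ≤ 9*Z)
    (hv : v1 ≠ 0 ∨ v3 ≠ 0) : 0 < Wq X Y Z v1 (-v1-v3) v3 := by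
  have hY : 0 < Y := hZ.trans hYZ
  have hX : 0 < X := hY.trans hXY
  have i1 := ker_int (k := 0) (a := 3/2) (b := 1/2) (c := 1/2) (by norm_num) (by norm_num) (by norm_num) hX hY hZ (by norm_num)
  have i2 := ker_int (k := 0) (a := 1/2) (b := 3/2) (c := 1/2) (by norm_num) (by norm_num) (by norm_num) hX hY hZ (by norm_num)
  have i3 := ker_int (k := 0) (a := 1/2) (b := 1/2) (c := 3/2) (by norm_num) (by norm_num) (by norm_num) hX hY hZ (by norm_num)
  have i4 := ker_int (k := 0) (a := 5/2) (b := 1/2) (c := 1/2) (by norm_num) (by norm_num) (by norm_num) hX hY hZ (by norm_num)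
  have i5 := ker_int (k := 0) (a := 1/2) (b := 5/2) (c := 1/2) (by norm_num) (by norm_num) (by norm_num) hX hY hZ (by norm_num)
  have i6 := ker_int (k := 0) (a := 1/2) (b := 1/2) (c := 5/2) (by norm_num) (by norm_num) (by norm_num) hX hY hZ (by norm_num)
  have i7 := ker_int (k := 0) (a := 3/2) (b := 3/2) (c := 1/2) (by norm_num) (by norm_num) (by norm_num) hX hY hZ (by norm_num)
  have i8 := ker_int (k := 0) (a := 3/2) (b := 1/2) (c := 3/2) (by norm_num) (by norm_num) (by norm_num) hX hY hZ (by norm_num)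
  have i9 := ker_int (k := 0) (a := 1/2) (b := 3/2) (c := 3/2) (by norm_num) (by norm_num) (by norm_num) hX hY hZ (by norm_num)
  set v2 := -v1-v3 with hv2
  obtain ⟨j1, e1⟩ := int3 (2*X*v1^2 + 3*(X*Z)/(X-Z)*(v1-v3)^2 + 2*v1^2*X)
    (-2*Y*v1^2 - 2*Y*v3^2 + 3*(-Y*Z+Y*X)/(X-Z)*(v1-v3)^2 + 2*v2^2*Y)
    (2*Z*v3^2 + 3*(-Z*X)/(X-Z)*(v1-v3)^2 + 2*v3^2*Z) i1 i2 i3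
  obtain ⟨j2, e2⟩ := int3 (-3*v1^2*X^2) (-3*v2^2*Y^2) (-3*v3^2*Z^2) i4 i5 i6
  obtain ⟨j3, e3⟩ := int3 (-2*v1*v2*(X*Y)) (-2*v1*v3*(X*Z)) (-2*v2*v3*(Y*Z)) i7 i8 i9
  obtain ⟨j, e⟩ := int3 1 1 1 j1 j2 j3
  have pos : ∀ s ∈ Set.Ioi (0:ℝ), 0 < 1 * ((2*X*v1^2 + 3*(X*Z)/(X-Z)*(v1-v3)^2 + 2*v1^2*X)*ker 0 (3/2) (1/2) (1/2) X Y Z s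
    + (-2*Y*v1^2 - 2*Y*v3^2 + 3*(-Y*Z+Y*X)/(X-Z)*(v1-v3)^2 + 2*v2^2*Y)*ker 0 (1/2) (3/2) (1/2) X Y Z s
    + (2*Z*v3^2 + 3*(-Z*X)/(X-Z)*(v1-v3)^2 + 2*v3^2*Z)*ker 0 (1/2) (1/2) (3/2) X Y Z s)
    + 1 * (-3*v1^2*X^2*ker 0 (5/2) (1/2) (1/2) X Y Z s + -3*v2^2*Y^2*ker 0 (1/2) (5/2) (1/2) X Y Z s
    + -3*v3^2*Z^2*ker 0 (1/2) (1/2) (5/2) X Y Z s)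
    + 1 * (-2*v1*v2*(X*Y)*ker 0 (3/2) (3/2) (1/2) X Y Z s + -2*v1*v3*(X*Z)*ker 0 (3/2) (1/2) (3/2) X Y Z s
    + -2*v2*v3*(Y*Z)*ker 0 (1/2) (3/2) (3/2) X Y Z s) := by
    intro s hs
    have hs : 0 < s := hs
    have p1 : 0 < s + X := by linarith
    have p2 : 0 < s + Y := by linarith
    have p3 : 0 < s + Z := by linarith
    have p4 : 0 < X - Z := by linarith
    have := Mq_pos' hs hZ hYZ hXY h9 hv
    have hw : 0 < (s+X)^(-(1/2:ℝ)) * (s+Y)^(-(1/2:ℝ)) * (s+Z)^(-(1/2:ℝ)) := by positivity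
    have := mul_pos hw this
    refine lt_of_lt_of_eq this ?_
    simp only [ker, rpow_32 p1, rpow_32 p2, rpow_32 p3, rpow_52 p1, rpow_52 p2, rpow_52 p3]
    have q1 := p1.ne'
    have q2 := p2.ne'
    have q3 := p3.ne'
    have q4 := p4.ne'
    rw [hv2]
    unfold Mq
    generalize (s+X)^(-(1/2:ℝ)) = w1
    generalize (s+Y)^(-(1/2:ℝ)) = w2
    generalize (s+Z)^(-(1/2:ℝ)) = w3
    field_simp
    ring
  have hW : 0 < 1 * Wq X Y Z v1 v2 v3 := by
    suffices h : _ by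
      refine lt_of_lt_of_eq h (e.trans ?_)
      rw [e1, e2, e3]
      simp only [Wq, Kint]
      ring
    rw [setIntegral_pos_iff_support_of_nonneg_ae ?_ j]
    · refine lt_of_lt_of_le ?_ (measure_mono (s := Set.Ioi (0:ℝ)) fun s hs => ⟨(pos s hs).ne', hs⟩)
      simp
    · exact (ae_restrict_iff' measurableSet_Ioi).2 (Filter.Eventually.of_forall fun s hs => (pos s hs).le)
  linarith

end

section
open Real MeasureTheory

lemma Kint_contAt {α : Type*} [TopologicalSpace α] {k : ℕ} {a b c : ℝ} (ha : 0 ≤ a) (hb : 0 ≤ b) (hc : 0 ≤ c)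
    (h : (k:ℝ) + 1 < a + b + c) {f1 f2 f3 : α → ℝ} {q : α} (h1 : 0 < f1 q) (h2 : 0 < f2 q)
    (h3 : 0 < f3 q) (c1 : ContinuousAt f1 q) (c2 : ContinuousAt f2 q) (c3 : ContinuousAt f3 q) :
    ContinuousAt (fun q => Kint k a b c (f1 q) (f2 q) (f3 q)) q :=
  ContinuousAt.comp (f := fun q => (f1 q, f2 q, f3 q)) (Kint_cont ha hb hc h _ h1 h2 h3)
    (c1.prodMk (c2.prodMk c3))

lemma PotDD_cont {α : Type*} [TopologicalSpace α] {P Q κ v1 v2 v3 : ℝ} {f1 f2 f3 : α → ℝ} {q : α}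
    (h1 : 0 < f1 q) (h2 : 0 < f2 q) (h3 : 0 < f3 q) (h4 : 0 < f1 q - f3 q)
    (c1 : ContinuousAt f1 q) (c2 : ContinuousAt f2 q) (c3 : ContinuousAt f3 q) :
    ContinuousAt (fun q => PotDD P Q κ (f1 q) (f2 q) (f3 q) v1 v2 v3) q := by
  have h5 : 0 < f1 q + f3 q := by linarith
  have d1 := c1.pow 2
  have d2 := c2.pow 2
  have d3 := c3.pow 2
  have k : ∀ a b c : ℝ, 0 ≤ a → 0 ≤ b → 0 ≤ c → 1 < a + b + c →
    ContinuousAt (fun q => Kint 0 a b c (f1 q^2) (f2 q^2) (f3 q^2)) q := fun a b c ha hb hc h =>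
     Kint_contAt ha hb hc (by simpa using h) (by positivity) (by positivity) (by positivity) d1 d2 d3
  have k1 := k (3/2) (1/2) (1/2) (by norm_num) (by norm_num) (by norm_num) (by norm_num)
  have k2 := k (1/2) (3/2) (1/2) (by norm_num) (by norm_num) (by norm_num) (by norm_num)
  have k3 := k (1/2) (1/2) (3/2) (by norm_num) (by norm_num) (by norm_num) (by norm_num)
  have k4 := k (5/2) (1/2) (1/2) (by norm_num) (by norm_num) (by norm_num) (by norm_num)
  have k5 := k (1/2) (5/2) (1/2) (by norm_num) (by norm_num) (by norm_num) (by norm_num)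
  have k6 := k (1/2) (1/2) (5/2) (by norm_num) (by norm_num) (by norm_num) (by norm_num)
  have k7 := k (3/2) (3/2) (1/2) (by norm_num) (by norm_num) (by norm_num) (by norm_num)
  have k8 := k (3/2) (1/2) (3/2) (by norm_num) (by norm_num) (by norm_num) (by norm_num)
  have k9 := k (1/2) (3/2) (3/2) (by norm_num) (by norm_num) (by norm_num) (by norm_num)
  have n1 : (f1 q - f3 q)^3 ≠ 0 := by positivity
  have n2 : (f1 q - f3 q)^4 ≠ 0 := by positivity
  have n3 : (f1 q + f3 q)^3 ≠ 0 := by positivity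
  have n4 : (f1 q + f3 q)^4 ≠ 0 := by positivity
  unfold PotDD
  fun_prop (disch := assumption)

lemma PotDD_quad (P Q κ ξ η ζ v1 v3 : ℝ) :
    PotDD P Q κ ξ η ζ v1 (-v1-v3) v3 =
      PotDD P Q κ ξ η ζ 1 (-1) 0 * v1^2
      + 2*((PotDD P Q κ ξ η ζ 1 (-2) 1 - PotDD P Q κ ξ η ζ 1 (-1) 0 - PotDD P Q κ ξ η ζ 0 (-1) 1)/2)*v1*v3
      + PotDD P Q κ ξ η ζ 0 (-1) 1 * v3^2 := by
  unfold PotDD; ring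

lemma PotDD_pos {P Q κ x y z v1 v3 : ℝ} (hκ : 0 < κ) (hz : 0 < z) (hyz : z < y) (hxy : y < x)
    (h9 : y^2 ≤ 9*z^2)
    (hP : P/(x-z)^3 = κ*((x^2*Kint 0 (3/2) (1/2) (1/2) (x^2) (y^2) (z^2) - y^2*Kint 0 (1/2) (3/2) (1/2) (x^2) (y^2) (z^2))/x
      + (y^2*Kint 0 (1/2) (3/2) (1/2) (x^2) (y^2) (z^2) - z^2*Kint 0 (1/2) (1/2) (3/2) (x^2) (y^2) (z^2))/z))
    (hQ : Q/(x+z)^3 = κ*((x^2*Kint 0 (3/2) (1/2) (1/2) (x^2) (y^2) (z^2) - y^2*Kint 0 (1/2) (3/2) (1/2) (x^2) (y^2) (z^2))/x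
      - (y^2*Kint 0 (1/2) (3/2) (1/2) (x^2) (y^2) (z^2) - z^2*Kint 0 (1/2) (1/2) (3/2) (x^2) (y^2) (z^2))/z))
    (hv : v1 ≠ 0 ∨ v3 ≠ 0) : 0 < PotDD P Q κ x y z v1 (-v1-v3) v3 := by
  have hy : 0 < y := hz.trans hyz
  have hx : 0 < x := hy.trans hxy
  have hYZ : z^2 < y^2 := by gcongr
  have hXY : y^2 < x^2 := by gcongr
  have h := mul_pos hκ (Wq_pos (by positivity) hYZ hXY h9 hv)
  refine lt_of_lt_of_eq h ?_
  have n1 : x - z ≠ 0 := by linarith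
  have n2 : x + z ≠ 0 := by linarith
  have n3 : x^2 - z^2 ≠ 0 := by
    have : x^2-z^2 = (x-z)*(x+z) := by ring
    rw [this]; exact mul_ne_zero n1 n2
  have e1 : ∀ v w : ℝ, -(P/2)*(v/(x-z)^3 - 3*w^2/(x-z)^4) = -(1/2)*(P/(x-z)^3)*(v - 3*w^2/(x-z)) := by
    intro v w; field_simp
  have e2 : ∀ v w : ℝ, (Q/2)*(v/(x+z)^3 - 3*w^2/(x+z)^4) = (1/2)*(Q/(x+z)^3)*(v - 3*w^2/(x+z)) := by
    intro v w; field_simp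
  unfold PotDD Wq
  rw [e1, e2, hP, hQ, show x^4 = (x^2)^2 by ring, show y^4 = (y^2)^2 by ring, show z^4 = (z^2)^2 by ring]
  generalize Kint 0 (3/2) (1/2) (1/2) (x^2) (y^2) (z^2) = K1
  generalize Kint 0 (1/2) (3/2) (1/2) (x^2) (y^2) (z^2) = K2
  generalize Kint 0 (1/2) (1/2) (3/2) (x^2) (y^2) (z^2) = K3
  dsimp only
  obtain ⟨a, ha⟩ : ∃ a, a = x^2*K1 - y^2*K2 := ⟨_, rfl⟩
  obtain ⟨c, hc⟩ : ∃ c, c = y^2*K2 - z^2*K3 := ⟨_, rfl⟩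
  rw [← ha, ← hc]
  have key : 2*a*v1^2 - 2*c*v3^2 + 3*(a*z^2+c*x^2)/(x^2-z^2)*(v1-v3)^2 =
    -(1/2)*((a/x+c/z))*(v1^2*x-v3^2*z - 3*(v1*x-v3*z)^2/(x-z)) - (1/2)*(a/x-c/z)*(v1^2*x+v3^2*z - 3*(v1*x+v3*z)^2/(x+z)) := by
    rw [show x^2-z^2 = (x-z)*(x+z) by ring]
    field_simp
    ring
  rw [key]
  ring

lemma PotD_zero {P Q κ x y z v1 v3 : ℝ} (hz : 0 < z) (hyz : z < y) (hxy : y < x)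
    (hP : P/(x-z)^3 = κ*((x^2*Kint 0 (3/2) (1/2) (1/2) (x^2) (y^2) (z^2) - y^2*Kint 0 (1/2) (3/2) (1/2) (x^2) (y^2) (z^2))/x
      + (y^2*Kint 0 (1/2) (3/2) (1/2) (x^2) (y^2) (z^2) - z^2*Kint 0 (1/2) (1/2) (3/2) (x^2) (y^2) (z^2))/z))
    (hQ : Q/(x+z)^3 = κ*((x^2*Kint 0 (3/2) (1/2) (1/2) (x^2) (y^2) (z^2) - y^2*Kint 0 (1/2) (3/2) (1/2) (x^2) (y^2) (z^2))/x
      - (y^2*Kint 0 (1/2) (3/2) (1/2) (x^2) (y^2) (z^2) - z^2*Kint 0 (1/2) (1/2) (3/2) (x^2) (y^2) (z^2))/z)) :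
    PotD P Q κ x y z v1 (-v1-v3) v3 = 0 := by
  have hx : 0 < x := by linarith
  have e1 : ∀ v : ℝ, -(P/2)*v/(x-z)^3 = -(1/2)*(P/(x-z)^3)*v := by intro v; ring
  have e2 : ∀ v : ℝ, (Q/2)*v/(x+z)^3 = (1/2)*(Q/(x+z)^3)*v := by intro v; ring
  unfold PotD
  rw [e1, e2, hP, hQ]
  generalize Kint 0 (3/2) (1/2) (1/2) (x^2) (y^2) (z^2) = K1
  generalize Kint 0 (1/2) (3/2) (1/2) (x^2) (y^2) (z^2) = K2
  generalize Kint 0 (1/2) (1/2) (3/2) (x^2) (y^2) (z^2) = K3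
  field_simp
  ring

lemma strict_of_second {φ φ' φ'' : ℝ → ℝ} (h1 : ∀ t ∈ Set.Icc (0:ℝ) 1, HasDerivAt φ (φ' t) t)
    (h2 : ∀ t ∈ Set.Icc (0:ℝ) 1, HasDerivAt φ' (φ'' t) t) (h0 : φ' 0 = 0)
    (hp : ∀ t ∈ Set.Icc (0:ℝ) 1, 0 < φ'' t) : φ 0 < φ 1 := by
  have m1 : StrictMonoOn φ' (Set.Icc 0 1) := by
    refine strictMonoOn_of_deriv_pos (convex_Icc _ _) (fun t ht => (h2 t ht).continuousAt.continuousWithinAt) ?_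
    intro t ht
    have ht := interior_subset ht
    rw [(h2 t ht).deriv]; exact hp t ht
  have m2 : StrictMonoOn φ (Set.Icc 0 1) := by
    refine strictMonoOn_of_deriv_pos (convex_Icc _ _) (fun t ht => (h1 t ht).continuousAt.continuousWithinAt) ?_
    intro t ht
    rw [interior_Icc] at ht
    rw [(h1 t ⟨ht.1.le, ht.2.le⟩).deriv, ← h0]
    exact m1 ⟨le_rfl, zero_le_one⟩ ⟨ht.1.le, ht.2.le⟩ ht.1
  exact m2 ⟨le_rfl, zero_le_one⟩ ⟨zero_le_one, le_rfl⟩ zero_lt_one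

lemma Pot_min {P Q κ x y z : ℝ} (hκ : 0 < κ) (hz : 0 < z) (hyz : z < y) (hxy : y < x)
    (h9 : y^2 ≤ 9*z^2)
    (hP : P/(x-z)^3 = κ*((x^2*Kint 0 (3/2) (1/2) (1/2) (x^2) (y^2) (z^2) - y^2*Kint 0 (1/2) (3/2) (1/2) (x^2) (y^2) (z^2))/x
      + (y^2*Kint 0 (1/2) (3/2) (1/2) (x^2) (y^2) (z^2) - z^2*Kint 0 (1/2) (1/2) (3/2) (x^2) (y^2) (z^2))/z))
    (hQ : Q/(x+z)^3 = κ*((x^2*Kint 0 (3/2) (1/2) (1/2) (x^2) (y^2) (z^2) - y^2*Kint 0 (1/2) (3/2) (1/2) (x^2) (y^2) (z^2))/x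
      - (y^2*Kint 0 (1/2) (3/2) (1/2) (x^2) (y^2) (z^2) - z^2*Kint 0 (1/2) (1/2) (3/2) (x^2) (y^2) (z^2))/z)) :
    ∃ ρ > 0, ∀ v1 v3 : ℝ, |v1| < ρ → |v3| < ρ → (v1 ≠ 0 ∨ v3 ≠ 0) →
      Pot P Q κ x y z < Pot P Q κ (x*exp v1) (y*exp (-v1-v3)) (z*exp v3) := by
  have hy : 0 < y := hz.trans hyz
  have hx : 0 < x := hy.trans hxy
  have c1 : ContinuousAt (fun q : ℝ × ℝ => x*exp q.1) 0 := by fun_prop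
  have c2 : ContinuousAt (fun q : ℝ × ℝ => y*exp (-q.1-q.2)) 0 := by fun_prop
  have c3 : ContinuousAt (fun q : ℝ × ℝ => z*exp q.2) 0 := by fun_prop
  have C : ∀ v1 v2 v3, ContinuousAt (fun q : ℝ × ℝ => PotDD P Q κ (x*exp q.1) (y*exp (-q.1-q.2)) (z*exp q.2) v1 v2 v3) 0 :=
    fun v1 v2 v3 => PotDD_cont (by simpa using hx) (by simpa using hy) (by simpa using hz)
      (by simp; linarith) c1 c2 c3
  have CA := C 1 (-1) 0
  have CB := C 0 (-1) 1
  have CC := C 1 (-2) 1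
  have pos : ∀ v1 v3, (v1 ≠ 0 ∨ v3 ≠ 0) → 0 < PotDD P Q κ x y z v1 (-v1-v3) v3 := fun v1 v3 hv =>
    PotDD_pos hκ hz hyz hxy h9 hP hQ hv
  have A0 : 0 < PotDD P Q κ x y z 1 (-1) 0 := by simpa using pos 1 0 (Or.inl one_ne_zero)
  set A := fun q : ℝ × ℝ => PotDD P Q κ (x*exp q.1) (y*exp (-q.1-q.2)) (z*exp q.2) 1 (-1) 0 with hA
  set B := fun q : ℝ × ℝ => PotDD P Q κ (x*exp q.1) (y*exp (-q.1-q.2)) (z*exp q.2) 0 (-1) 1 with hB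
  set D := fun q : ℝ × ℝ => PotDD P Q κ (x*exp q.1) (y*exp (-q.1-q.2)) (z*exp q.2) 1 (-2) 1 with hD
  have hA0 : 0 < A 0 := by simpa [hA] using A0
  have pos' : ∀ v1 v3, (v1 ≠ 0 ∨ v3 ≠ 0) → 0 < A 0*v1^2 + 2*((D 0-A 0-B 0)/2)*v1*v3 + B 0 * v3^2 := by
    intro v1 v3 hv
    have := pos v1 v3 hv
    rw [PotDD_quad] at this
    simpa [hA, hB, hD] using this
  have hdet : 0 < A 0 * B 0 - ((D 0-A 0-B 0)/2)^2 := by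
    have := pos' (-((D 0-A 0-B 0)/2)) (A 0) (Or.inr hA0.ne')
    refine pos_of_mul_pos_right (a := A 0) ?_ hA0.le
    nlinarith
  have ev1 := CA.eventually_const_lt hA0
  have ev2 := ((CA.mul CB).sub (((CC.sub CA).sub CB).div_const 2 |>.pow 2)).eventually_const_lt hdet
  have ev3 := (c1.sub c3).eventually_const_lt (u := 0) (by simp; linarith)
  obtain ⟨ρ, hρ, H⟩ := Metric.eventually_nhds_iff.1 (ev1.and (ev2.and ev3))
  refine ⟨ρ, hρ, fun v1 v3 b1 b3 hv => ?_⟩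
  have key := strict_of_second
    (φ := fun t => Pot P Q κ (x*exp (t*v1)) (y*exp (t*(-v1-v3))) (z*exp (t*v3)))
    (φ' := fun t => PotD P Q κ (x*exp (t*v1)) (y*exp (t*(-v1-v3))) (z*exp (t*v3)) v1 (-v1-v3) v3)
    (φ'' := fun t => PotDD P Q κ (x*exp (t*v1)) (y*exp (t*(-v1-v3))) (z*exp (t*v3)) v1 (-v1-v3) v3)
  have dd : ∀ u v t : ℝ, HasDerivAt (fun t => u*exp (t*v)) (v*(u*exp (t*v))) t := by
    intro u v t
    refine ((((hasDerivAt_id t).mul_const v).exp).const_mul u).congr_deriv ?_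
    simp; ring
  have hH : ∀ t ∈ Set.Icc (0:ℝ) 1, _ := fun t ht => @H (t*v1, t*v3) (by
    rw [Prod.dist_eq]
    simp only [Prod.fst_zero, Prod.snd_zero, Real.dist_eq, sub_zero, abs_mul, abs_of_nonneg ht.1]
    exact max_lt ((mul_le_of_le_one_left (abs_nonneg _) ht.2).trans_lt b1)
      ((mul_le_of_le_one_left (abs_nonneg _) ht.2).trans_lt b3))
  simp only [zero_mul, one_mul, exp_zero, mul_one] at key
  apply key
  · intro t ht
    exact Pot_deriv (dd _ _ t) (dd _ _ t) (dd _ _ t) (by positivity) (by positivity) (by positivity) (hH t ht).2.2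
  · intro t ht
    exact PotD_deriv (dd _ _ t) (dd _ _ t) (dd _ _ t) (by positivity) (by positivity) (by positivity) (hH t ht).2.2
  · exact PotD_zero hz hyz hxy hP hQ
  · intro t ht
    obtain ⟨g1, g2, g3⟩ := hH t ht
    simp only [hA, hB, hD, Pi.sub_apply, Pi.mul_apply, Pi.pow_apply, show -(t*v1) - t*v3 = t*(-v1-v3) by ring] at g1 g2
    rw [PotDD_quad]
    exact quad_pos g1 g2 hv

end

section
open Real MeasureTheory

noncomputable def αf (u v : ℝ) : ℝ := (u^2+v^2)/(u^2-v^2)^2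
noncomputable def βf (u v : ℝ) : ℝ := 2*u*v/(u^2-v^2)^2

lemma αβ_add {u v : ℝ} (hv : 0 < v) (huv : v < u) : αf u v + βf u v = 1/(u-v)^2 := by
  unfold αf βf
  have h1 : u - v ≠ 0 := by linarith
  have h2 : u + v ≠ 0 := by linarith
  rw [show u^2-v^2 = (u-v)*(u+v) by ring]
  field_simp; ring

lemma αβ_sub {u v : ℝ} (hv : 0 < v) (huv : v < u) : αf u v - βf u v = 1/(u+v)^2 := by
  unfold αf βf
  have h1 : u - v ≠ 0 := by linarith
  have h2 : u + v ≠ 0 := by linarith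
  rw [show u^2-v^2 = (u-v)*(u+v) by ring]
  field_simp; ring

lemma βf_pos {u v : ℝ} (hv : 0 < v) (huv : v < u) : 0 < βf u v := by
  unfold βf
  have h1 : 0 < u - v := by linarith
  have h2 : 0 < u := by linarith
  rw [show u^2-v^2 = (u-v)*(u+v) by ring]
  positivity

lemma α12 {x y z : ℝ} (hz : 0 < z) (hyz : z < y) (hxy : y < x) : αf x z < αf y z := by
  have a1 := αβ_add hz hyz
  have a2 := αβ_add hz (hyz.trans hxy)
  have b1 := αβ_sub hz hyz
  have b2 := αβ_sub hz (hyz.trans hxy)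
  have c1 : 1/(x-z)^2 < 1/(y-z)^2 := by
    have : 0 < y - z := by linarith
    gcongr
  have c2 : 1/(x+z)^2 < 1/(y+z)^2 := by
    have : 0 < y := by linarith
    gcongr
  linarith

lemma α32 {x y z : ℝ} (hz : 0 < z) (hyz : z < y) (hxy : y < x) : αf x z < αf x y := by
  unfold αf
  have h1 : 0 < x^2-y^2 := by nlinarith
  have h3 : 0 < x := by linarith
  gcongr

lemma det_ge {D β r : ℝ} (hD : 0 < D) (hβ : 0 < β) (hr : 0 < r) : (D+β)^2 ≤ (D+β*r)*(D+β*r⁻¹) := by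
  have : (D+β*r)*(D+β*r⁻¹) - (D+β)^2 = D*β*(r-1)^2*r⁻¹ := by
    field_simp; ring
  have : 0 ≤ D*β*(r-1)^2*r⁻¹ := by positivity
  linarith

lemma det1 {x y z L R : ℝ} (hz : 0 < z) (hyz : z < y) (hxy : y < x) (hL : 0 < L) (hR : 0 < R) :
    0 < (αf y z - αf x z + βf x z*(R/L)) * (αf y z - αf x z + βf x z*(L/R)) - (βf y z)^2 := by
  have hD : 0 < αf y z - αf x z := sub_pos.2 (α12 hz hyz hxy)
  have hβ := βf_pos hz (hyz.trans hxy)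
  have hβ1 := βf_pos hz hyz
  have := det_ge hD hβ (by positivity : 0 < R/L)
  rw [inv_div] at this
  have b1 := αβ_sub hz hyz
  have b2 := αβ_sub hz (hyz.trans hxy)
  have c2 : 1/(x+z)^2 < 1/(y+z)^2 := by
    have : 0 < y := by linarith
    gcongr
  have : (βf y z)^2 < (αf y z - αf x z + βf x z)^2 := by
    apply pow_lt_pow_left₀ _ hβ1.le two_ne_zero
    linarith
  linarith

lemma det3 {x y z L R C1 C2 : ℝ} (hz : 0 < z) (hyz : z < y) (hxy : y < x) (hL : 0 < L) (hR : 0 < R)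
    (h1 : 0 < C1) (h2 : 0 < C2)
    (hP : (L-R)^2 = ((x - z) ^ 4 / (x * z)) *
    ((x * y ^ 2 * z + (x ^ 2 * y ^ 2 - x ^ 2 * z ^ 2 + y ^ 2 * z ^ 2)) * C1
      + (x * z + y ^ 2) * C2))
    (hQ : (L+R)^2 = ((x + z) ^ 4 / (x * z)) *
    ((x * y ^ 2 * z - (x ^ 2 * y ^ 2 - x ^ 2 * z ^ 2 + y ^ 2 * z ^ 2)) * C1
      + (x * z - y ^ 2) * C2)) :
    0 < (αf x y - αf x z + βf x z*(R/L)) * (αf x y - αf x z + βf x z*(L/R)) - (βf x y)^2 := by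
  have hy : 0 < y := hz.trans hyz
  have hx : 0 < x := hy.trans hxy
  have hxz : 0 < x - z := by linarith
  have hxy' : 0 < x - y := by linarith
  set D := αf x y - αf x z with hD
  have hY : 0 < y^2 - z^2 := by nlinarith
  have e : (D + βf x z*(R/L)) * (D + βf x z*(L/R)) - (βf x y)^2 =
     ((L+R)^2*((D+βf x z)^2 - (βf x y)^2) - (L-R)^2*((D-βf x z)^2-(βf x y)^2))/(4*L*R) := by
    field_simp; ring
  have a2 := αβ_add hz (hyz.trans hxy)
  have b2 := αβ_sub hz (hyz.trans hxy)
  have a3 := αβ_add hy hxy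
  have b3 := αβ_sub hy hxy
  have f1 : (D+βf x z)^2 - (βf x y)^2 = -((y^2-z^2)*((2*x+z)^2-y^2))/((x-y)^2*(x+y)^2*(x+z)^4) := by
    have : (D+βf x z)^2 - (βf x y)^2 = ((αf x y - βf x y) - (αf x z - βf x z))*((αf x y + βf x y) - (αf x z - βf x z)) := by
      rw [hD]; ring
    rw [this, a3, b3, b2]
    field_simp; ring
  have f2 : (D-βf x z)^2 - (βf x y)^2 = -((y^2-z^2)*((2*x-z)^2-y^2))/((x-y)^2*(x+y)^2*(x-z)^4) := by
    have : (D-βf x z)^2 - (βf x y)^2 = ((αf x y - βf x y) - (αf x z + βf x z))*((αf x y + βf x y) - (αf x z + βf x z)) := by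
      rw [hD]; ring
    rw [this, a3, b3, a2]
    field_simp; ring
  rw [e, f1, f2, hP, hQ]
  have E : 0 < (4*x^4 - (x ^ 2 * y ^ 2 - x ^ 2 * z ^ 2 + y ^ 2 * z ^ 2))*C1 + (4*x^2-y^2)*C2 := by
    have hYX : y^2 < x^2 := by gcongr
    have hZY : z^2 < y^2 := by gcongr
    have i1 : 0 < 4*x^2-y^2 := by nlinarith
    have i2 : 0 < 4*x^4 - (x ^ 2 * y ^ 2 - x ^ 2 * z ^ 2 + y ^ 2 * z ^ 2) := by
      have j1 : x^2*y^2 ≤ x^2*x^2 := by gcongr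
      have j2 : y^2*z^2 ≤ x^2*x^2 := by gcongr; linarith
      have j3 : 0 < x^2*z^2 := by positivity
      have j4 : 0 < x^2*x^2 := by positivity
      have j5 : x^4 = x^2*x^2 := by ring
      rw [j5]; linarith
    positivity
  have := mul_pos (mul_pos hY hY) E
  have tot : 0 < 2*((y^2-z^2)*(y^2-z^2)*((4*x^4 - (x ^ 2 * y ^ 2 - x ^ 2 * z ^ 2 + y ^ 2 * z ^ 2))*C1 + (4*x^2-y^2)*C2))
     /((x-y)^2*(x+y)^2*(x*z)*(4*L*R)) := by positivity
  refine lt_of_lt_of_eq tot ?_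
  field_simp
  ring

lemma memB_pos {b1 b2 : ℝ} (h : memB b1 b2) : 0 < b1 ∧ 0 < b2 ∧ 0 < (b1*b2)⁻¹ ∧ (b1*b2)⁻¹ < b2 ∧ b2 < b1 := by
  obtain ⟨h1, h2, h3⟩ := h
  have s : 0 < √b1 := inv_pos.1 h3
  have p1 : 0 < b1 := Real.sqrt_pos.1 s
  have p2 : 0 < b2 := h3.trans h2
  refine ⟨p1, p2, by positivity, ?_, h1⟩
  rw [inv_lt_iff_one_lt_mul₀ (by positivity)]
  have a : 1 < √b1*b2 := by
    rw [inv_lt_iff_one_lt_mul₀ s] at h2; linarith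
  have : √b1^2 = b1 := Real.sq_sqrt p1.le
  have e : b2*(b1*b2) = (√b1*b2)*(√b1*b2) := by rw [← this]; simp; ring
  rw [e]; nlinarith

lemma pow32 {a b c r : ℝ} (ha : 0 < a) (hb : 0 < b) (hc : 0 < c) : (a*b*c)^r = a^r*b^r*c^r := by
  rw [Real.mul_rpow (by positivity) hc.le, Real.mul_rpow ha.le hb.le]

lemma riC1_eq {g x y z : ℝ} (hx : 0 < x) (hy : 0 < y) (hz : 0 < z) :
    riC1 g x y z = 2*π*g*Kint 1 (3/2) (3/2) (3/2) (x^2) (y^2) (z^2) := by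
  unfold riC1 Kint
  congr 1
  refine setIntegral_congr_fun measurableSet_Ioi fun s hs => ?_
  have hs : 0 < s := hs
  simp only [ker]
  rw [pow32 (by positivity) (by positivity) (by positivity), neg_div, pow_one]

lemma riC2_eq {g x y z : ℝ} (hx : 0 < x) (hy : 0 < y) (hz : 0 < z) :
    riC2 g x y z = 2*π*g*Kint 2 (3/2) (3/2) (3/2) (x^2) (y^2) (z^2) := by
  unfold riC2 Kint
  congr 1
  refine setIntegral_congr_fun measurableSet_Ioi fun s hs => ?_
  have hs : 0 < s := hs
  simp only [ker]
  rw [pow32 (by positivity) (by positivity) (by positivity), neg_div]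

lemma Hint_eq {x y z : ℝ} (hx : x ≠ 0) (hy : y ≠ 0) (hz : z ≠ 0) :
    ∫ s in Set.Ioi (0:ℝ), ((s + x ^ 2) * (s + y ^ 2) * (s + z ^ 2)) ^ (-(1:ℝ)/2) =
    Kint 0 (1/2) (1/2) (1/2) (x^2) (y^2) (z^2) := by
  unfold Kint
  refine setIntegral_congr_fun measurableSet_Ioi fun s hs => ?_
  have hs : 0 < s := hs
  simp only [ker]
  rw [pow32 (by positivity) (by positivity) (by positivity), neg_div, pow_zero, one_mul]

lemma Kint_pos {k : ℕ} {a b c X Y Z : ℝ} (ha : 0 ≤ a) (hb : 0 ≤ b) (hc : 0 ≤ c)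
    (hX : 0 < X) (hY : 0 < Y) (hZ : 0 < Z) (h : (k:ℝ) + 1 < a + b + c) : 0 < Kint k a b c X Y Z := by
  have pos : ∀ s ∈ Set.Ioi (0:ℝ), 0 < ker k a b c X Y Z s := by
    intro s hs
    have hs : 0 < s := hs
    unfold ker; positivity
  unfold Kint
  rw [setIntegral_pos_iff_support_of_nonneg_ae ?_ (ker_int ha hb hc hX hY hZ h)]
  · refine lt_of_lt_of_le ?_ (measure_mono (s := Set.Ioi (0:ℝ)) fun s hs => ⟨(pos s hs).ne', hs⟩)
    simp
  · exact (ae_restrict_iff' measurableSet_Ioi).2 (Filter.Eventually.of_forall fun s hs => (pos s hs).le)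

lemma GSp_eq {g x y z : ℝ} (hz : 0 < z) (hyz : z < y) (hxy : y < x) :
    GSp g x y z/(x-z)^3 = 2*π*g*((x^2*Kint 0 (3/2) (1/2) (1/2) (x^2) (y^2) (z^2) - y^2*Kint 0 (1/2) (3/2) (1/2) (x^2) (y^2) (z^2))/x
      + (y^2*Kint 0 (1/2) (3/2) (1/2) (x^2) (y^2) (z^2) - z^2*Kint 0 (1/2) (1/2) (3/2) (x^2) (y^2) (z^2))/z) := by
  have hy : 0 < y := hz.trans hyz
  have hx : 0 < x := hy.trans hxy
  have n1 : x - z ≠ 0 := by linarith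
  unfold GSp
  rw [Kid1 (by positivity) (by positivity) (by positivity), Kid2 (by positivity) (by positivity) (by positivity),
    riC1_eq hx hy hz, riC2_eq hx hy hz]
  field_simp
  ring

lemma GSm_eq {g x y z : ℝ} (hz : 0 < z) (hyz : z < y) (hxy : y < x) :
    GSm g x y z/(x+z)^3 = 2*π*g*((x^2*Kint 0 (3/2) (1/2) (1/2) (x^2) (y^2) (z^2) - y^2*Kint 0 (1/2) (3/2) (1/2) (x^2) (y^2) (z^2))/x
      - (y^2*Kint 0 (1/2) (3/2) (1/2) (x^2) (y^2) (z^2) - z^2*Kint 0 (1/2) (1/2) (3/2) (x^2) (y^2) (z^2))/z) := by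
  have hy : 0 < y := hz.trans hyz
  have hx : 0 < x := hy.trans hxy
  unfold GSm
  rw [Kid1 (by positivity) (by positivity) (by positivity), Kid2 (by positivity) (by positivity) (by positivity),
    riC1_eq hx hy hz, riC2_eq hx hy hz]
  field_simp
  ring

lemma GSm_9 {g x y z : ℝ} (hg : 0 < g) (hz : 0 < z) (hyz : z < y) (hxy : y < x) (h : 0 < GSm g x y z) :
    y^2 ≤ 9*z^2 := by
  by_contra! hc
  have hy : 0 < y := hz.trans hyz
  have hx : 0 < x := hy.trans hxy
  have q := Q_nonpos hz hyz hxy hc.le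
  have := mul_nonneg (by positivity : 0 ≤ (x+z)^4/(x*z)*(2*π*g)) q
  unfold GSm at h
  rw [riC1_eq hx hy hz, riC2_eq hx hy hz] at h
  linarith


end

section
open Real MeasureTheory

noncomputable def Tk (b1 b2 b3 c1 c2 : ℝ) : ℝ :=
  ((b2 ^ 2 + b3 ^ 2) * b1 ^ 2 * c1 ^ 2 + (b1 ^ 2 + b3 ^ 2) * b2 ^ 2 * c2 ^ 2
        - 2 * b3 * c1 * c2) /
      (2 * (b1 ^ 2 * b2 ^ 2 + b1 ^ 2 * b3 ^ 2 + b2 ^ 2 * b3 ^ 2))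

lemma div_two (a d : ℝ) : a/(2*d) = a/d/2 := by rw [div_div, mul_comm]

lemma Hred_eq (g : ℝ) (p : Fin 10 → ℝ) (h0 : p 0 ≠ 0) (h1 : p 1 ≠ 0) {b3 : ℝ} (hb : b3 = (p 0 * p 1)⁻¹) :
    Hred g p = Tk (p 0) (p 1) b3 (p 2) (p 3)
     + (αf (p 0) (p 1)*(p 6^2+p 9^2) + 2*βf (p 0) (p 1)*p 6*p 9)/2
     + (αf (p 0) b3*(p 5^2+p 8^2) + 2*βf (p 0) b3*p 5*p 8)/2
     + (αf (p 1) b3*(p 4^2+p 7^2) + 2*βf (p 1) b3*p 4*p 7)/2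
     - 2*π*g*Kint 0 (1/2) (1/2) (1/2) (p 0^2) (p 1^2) (b3^2) := by
  have h3 : (p 0*p 1)⁻¹ ≠ 0 := by positivity
  unfold Hred
  dsimp only
  rw [Hint_eq h0 h1 h3, ← hb]
  have e : ∀ a b d m n : ℝ, ((a^2+b^2)*(m^2+n^2)+4*a*b*m*n)/(2*d) =
    ((a^2+b^2)/d*(m^2+n^2) + 2*(2*a*b/d)*m*n)/2 := by
    intro a b d m n; rw [div_two]; ring
  rw [e, e, e]
  rfl

lemma Tk_pos {b1 b2 b3 c1 c2 : ℝ} (h1 : 0 < b1) (h2 : 0 < b2) (h3 : b3 = (b1*b2)⁻¹) (hc : c1 ≠ 0 ∨ c2 ≠ 0) :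
    0 < Tk b1 b2 b3 c1 c2 := by
  have p3 : 0 < b3 := by rw [h3]; positivity
  have e : b1*b2*b3 = 1 := by rw [h3]; field_simp
  unfold Tk
  refine div_pos ?_ (by positivity)
  have := quad_pos (E := (b2 ^ 2 + b3 ^ 2) * b1 ^ 2) (C := -b3) (D := (b1 ^ 2 + b3 ^ 2) * b2 ^ 2)
    (by positivity) (by
      have : (b2 ^ 2 + b3 ^ 2) * b1 ^ 2 * ((b1 ^ 2 + b3 ^ 2) * b2 ^ 2) =
        b1^2*b2^2*(b1^2*b2^2+b2^2*b3^2) + (b1*b2*b3)^2*(b1^2 + b3^2) := by ring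
      rw [this, e]
      have : 0 < b1^2*b2^2*(b1^2*b2^2+b2^2*b3^2) + b1^2 := by positivity
      linarith) hc
  linarith

lemma Tk_zero (b1 b2 b3 : ℝ) : Tk b1 b2 b3 0 0 = 0 := by simp [Tk]

lemma Pot_id {P Q κ u y v L R : ℝ} (hv : 0 < v) (huv : v < u) (hP : (L-R)^2 = P) (hQ : (L+R)^2 = Q) :
    Pot P Q κ u y v = (αf u v*(L^2+R^2) - 2*βf u v*L*R)/2
     - κ*Kint 0 (1/2) (1/2) (1/2) (u^2) (y^2) (v^2) := by
  have a := αβ_add hv huv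
  have b := αβ_sub hv huv
  unfold Pot
  have a1 : αf u v = (1/(u-v)^2 + 1/(u+v)^2)/2 := by linarith
  have b1 : βf u v = (1/(u-v)^2 - 1/(u+v)^2)/2 := by linarith
  rw [a1, b1, ← hP, ← hQ]
  ring

lemma amgm {L R s t : ℝ} (hL : 0 < L) (hR : 0 < R) : -(2*s*t) ≤ R/L*s^2 + L/R*t^2 := by
  have : R/L*s^2 + L/R*t^2 + 2*s*t = R/L*(s+L/R*t)^2 := by field_simp; ring
  have : 0 ≤ R/L*(s+L/R*t)^2 := by positivity
  linarith

lemma H_lower {g P Q L R b3 : ℝ} {p : Fin 10 → ℝ} (hb : b3 = (p 0 * p 1)⁻¹) (h3 : 0 < b3)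
    (h1 : b3 < p 1) (h0 : p 1 < p 0) (hL : 0 < L) (hR : 0 < R) (hP : (L-R)^2 = P) (hQ : (L+R)^2 = Q)
    (sl : p 4^2 + p 5^2 + p 6^2 = L^2) (sr : p 7^2+p 8^2+p 9^2 = R^2) :
    Tk (p 0) (p 1) b3 (p 2) (p 3) + Pot P Q (2*π*g) (p 0) (p 1) b3
     + ((αf (p 0) (p 1) - αf (p 0) b3 + βf (p 0) b3*(R/L))*p 6^2 + 2*βf (p 0) (p 1)*p 6*p 9
      + (αf (p 0) (p 1) - αf (p 0) b3 + βf (p 0) b3*(L/R))*p 9^2)/2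
     + ((αf (p 1) b3 - αf (p 0) b3 + βf (p 0) b3*(R/L))*p 4^2 + 2*βf (p 1) b3*p 4*p 7
      + (αf (p 1) b3 - αf (p 0) b3 + βf (p 0) b3*(L/R))*p 7^2)/2 ≤ Hred g p := by
  have p1 : 0 < p 1 := h3.trans h1
  have p0 : 0 < p 0 := p1.trans h0
  rw [Hred_eq g p p0.ne' p1.ne' hb, Pot_id h3 (h1.trans h0) hP hQ]
  have β := βf_pos h3 (h1.trans h0)
  have am := mul_le_mul_of_nonneg_left (amgm (s := p 5) (t := p 8) hL hR) β.le
  have e5 : p 5^2 = L^2 - p 4^2 - p 6^2 := by linarith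
  have e8 : p 8^2 = R^2 - p 7^2 - p 9^2 := by linarith
  rw [e5, e8] at am
  rw [e5, e8]
  have i1 : R/L*L^2 = L*R := by field_simp
  have i2 : L/R*R^2 = L*R := by field_simp
  have am' : βf (p 0) b3 * (-(2*p 5*p 8)) ≤ βf (p 0) b3 * (2*(L*R) - R/L*(p 4^2+p 6^2) - L/R*(p 7^2+p 9^2)) := by
    refine am.trans (le_of_eq ?_)
    linear_combination βf (p 0) b3*(i1+i2)
  linarith

end

section
open Real MeasureTheory Filter Topology

lemma ctsα {α : Type*} [TopologicalSpace α] {f h : α → ℝ} {q : α} (cf : ContinuousAt f q)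
    (ch : ContinuousAt h q) (h0 : 0 < h q) (h1 : h q < f q) : ContinuousAt (fun p => αf (f p) (h p)) q := by
  have : (f q^2 - h q^2)^2 ≠ 0 := by
    have : 0 < f q^2 - h q^2 := by nlinarith
    positivity
  unfold αf
  fun_prop (disch := assumption)

lemma ctsβ {α : Type*} [TopologicalSpace α] {f h : α → ℝ} {q : α} (cf : ContinuousAt f q)
    (ch : ContinuousAt h q) (h0 : 0 < h q) (h1 : h q < f q) : ContinuousAt (fun p => βf (f p) (h p)) q := by
  have : (f q^2 - h q^2)^2 ≠ 0 := by
    have : 0 < f q^2 - h q^2 := by nlinarith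
    positivity
  unfold βf
  fun_prop (disch := assumption)

lemma quad_nonneg {E C D e d : ℝ} (hE : 0 < E) (h : 0 < E * D - C^2) :
    0 ≤ E * e^2 + 2 * C * e * d + D * d^2 := by
  by_cases hne : e ≠ 0 ∨ d ≠ 0
  · exact (quad_pos hE h hne).le
  · push Not at hne
    simp [hne.1, hne.2]

lemma H_star {g x y z L R P Q : ℝ} (hz : 0 < z) (hyz : z < y) (hxy : y < x) (hb : z = (x*y)⁻¹)
    (hP : (L-R)^2 = P) (hQ : (L+R)^2 = Q) :
    Hred g ![x, y, 0, 0, 0, L, 0, 0, -R, 0] = Pot P Q (2*π*g) x y z := by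
  have hy : 0 < y := hz.trans hyz
  have hx : 0 < x := hy.trans hxy
  rw [Hred_eq g ![x, y, 0, 0, 0, L, 0, 0, -R, 0] hx.ne' hy.ne' hb, Pot_id hz (hyz.trans hxy) hP hQ]
  have := Tk_zero x y z
  simp [Fin.isValue] 
  rw [this]; ring

lemma H_min_alg {g x y z L R q ρ : ℝ} {p : Fin 10 → ℝ} (hz : 0 < z) (hyz : z < y) (hxy : y < x) (hb : z = (x*y)⁻¹)
    (hL : 0 < L) (hR : 0 < R) (hP : (L-R)^2 = GSp g x y z) (hQ : (L+R)^2 = GSm g x y z)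
    (hmin : ∀ v1 v3 : ℝ, |v1| < ρ → |v3| < ρ → (v1 ≠ 0 ∨ v3 ≠ 0) →
      Pot (GSp g x y z) (GSm g x y z) (2*π*g) x y z < Pot (GSp g x y z) (GSm g x y z) (2*π*g) (x*exp v1) (y*exp (-v1-v3)) (z*exp v3))
    (hq : q = (p 0*p 1)⁻¹)
    (w1 : 0 < αf (p 1) q - αf (p 0) q + βf (p 0) q*(R/L))
    (w2 : 0 < αf (p 0) (p 1) - αf (p 0) q + βf (p 0) q*(R/L))
    (w3 : 0 < (αf (p 1) q - αf (p 0) q + βf (p 0) q*(R/L))*(αf (p 1) q - αf (p 0) q + βf (p 0) q*(L/R)) - βf (p 1) q^2)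
    (w4 : 0 < (αf (p 0) (p 1) - αf (p 0) q + βf (p 0) q*(R/L))*(αf (p 0) (p 1) - αf (p 0) q + βf (p 0) q*(L/R)) - βf (p 0) (p 1)^2)
    (w5 : 0 < q) (w6 : 0 < p 1 - q) (w7 : 0 < p 0 - p 1) (w8 : 0 < p 5) (w9 : p 8 < 0)
    (w10 : |log (p 0/x)| < ρ) (w11 : |log (q/z)| < ρ)
    (sl : p 4^2 + p 5^2 + p 6^2 = L^2) (sr : p 7^2+p 8^2+p 9^2 = R^2)
    (hne : p ≠ ![x, y, 0, 0, 0, L, 0, 0, -R, 0]) :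
    Hred g ![x, y, 0, 0, 0, L, 0, 0, -R, 0] < Hred g p := by
  have hy : 0 < y := hz.trans hyz
  have hx : 0 < x := hy.trans hxy
  have hxyz : x*y*z = 1 := by rw [hb]; field_simp
  have low := H_lower (g := g) (p := p) hq w5 (by linarith) (by linarith) hL hR hP hQ sl sr
  rw [H_star hz hyz hxy hb hP hQ]
  have p1 : 0 < p 1 := by linarith
  have p0 : 0 < p 0 := by linarith
  have hpq : p 0*p 1*q = 1 := by rw [hq]; field_simp
  have pot : ¬ (p 0 = x ∧ q = z) → Pot (GSp g x y z) (GSm g x y z) (2*π*g) x y z <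
     Pot (GSp g x y z) (GSm g x y z) (2*π*g) (p 0) (p 1) q := by
    intro hn
    have := hmin _ _ w10 w11 (by
      by_contra! hc
      apply hn
      have g1 : exp (log (p 0/x)) = 1 := by rw [hc.1, exp_zero]
      have g2 : exp (log (q/z)) = 1 := by rw [hc.2, exp_zero]
      rw [exp_log (by positivity), div_eq_one_iff_eq (by positivity)] at g1 g2
      exact ⟨g1, g2⟩)
    rw [sub_eq_add_neg, exp_add, exp_neg, exp_neg, exp_log (by positivity), exp_log (by positivity)] at this
    have i1 : x*(p 0/x) = p 0 := by field_simp
    have i2 : z*(q/z) = q := by field_simp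
    have i3 : y*((p 0/x)⁻¹*(q/z)⁻¹) = p 1 := by
      field_simp
      linear_combination hxyz - hpq
    rwa [i1, i2, i3] at this
  have pot' : Pot (GSp g x y z) (GSm g x y z) (2*π*g) x y z ≤
     Pot (GSp g x y z) (GSm g x y z) (2*π*g) (p 0) (p 1) q := by
    by_cases hc : p 0 = x ∧ q = z
    · have : p 1 = y := by
        have h2 := hpq
        rw [hc.1, hc.2, ← hxyz] at h2
        have : x*z*(p 1 - y) = 0 := by linear_combination h2
        rcases mul_eq_zero.1 this with h | h
        · exact absurd h (by positivity)
        · linarith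
      rw [hc.1, hc.2, this]
    · exact (pot hc).le
  have t0 : 0 ≤ Tk (p 0) (p 1) q (p 2) (p 3) := by
    by_cases hc : p 2 ≠ 0 ∨ p 3 ≠ 0
    · exact (Tk_pos p0 p1 hq hc).le
    · push Not at hc
      rw [hc.1, hc.2, Tk_zero]
  have n1 := quad_nonneg (e := p 4) (d := p 7) w1 w3
  have n3 := quad_nonneg (e := p 6) (d := p 9) w2 w4
  by_cases k1 : p 4 ≠ 0 ∨ p 7 ≠ 0
  · have := quad_pos w1 w3 k1
    linarith
  by_cases k3 : p 6 ≠ 0 ∨ p 9 ≠ 0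
  · have := quad_pos w2 w4 k3
    linarith
  by_cases k2 : p 2 ≠ 0 ∨ p 3 ≠ 0
  · have := Tk_pos p0 p1 hq k2
    linarith
  by_cases kb : p 0 = x ∧ q = z
  · exfalso
    apply hne
    push Not at k1 k2 k3
    rw [k1.1, k3.1] at sl
    rw [k1.2, k3.2] at sr
    have f5 : p 5 = L := by
      have : (p 5 - L)*(p 5+L)=0 := by linear_combination sl
      rcases mul_eq_zero.1 this with h|h <;> linarith
    have f8 : p 8 = -R := by
      have : (p 8 + R)*(p 8-R)=0 := by linear_combination sr
      rcases mul_eq_zero.1 this with h|h <;> linarith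
    have f1 : p 1 = y := by
        have h2 := hpq
        rw [kb.1, kb.2, ← hxyz] at h2
        have : x*z*(p 1 - y) = 0 := by linear_combination h2
        rcases mul_eq_zero.1 this with h | h
        · exact absurd h (by positivity)
        · linarith
    ext i
    fin_cases i
    · exact kb.1
    · exact f1
    · exact k2.1
    · exact k2.2
    · exact k1.1
    · exact f5
    · exact k3.1
    · exact k1.2
    · exact f8
    · exact k3.2
  · have := pot kb
    linarith

lemma H_min {g x y z L R : ℝ} (hg : 0 < g) (hz : 0 < z) (hyz : z < y) (hxy : y < x) (hb : z = (x*y)⁻¹)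
    (hL : 0 < L) (hR : 0 < R) (hP : (L-R)^2 = GSp g x y z) (hQ : (L+R)^2 = GSm g x y z) :
    ∀ᶠ p : Fin 10 → ℝ in 𝓝 ![x, y, 0, 0, 0, L, 0, 0, -R, 0],
      p 4^2 + p 5^2 + p 6^2 = L^2 → p 7^2+p 8^2+p 9^2 = R^2 → p ≠ ![x, y, 0, 0, 0, L, 0, 0, -R, 0] →
      Hred g ![x, y, 0, 0, 0, L, 0, 0, -R, 0] < Hred g p := by
  have hy : 0 < y := hz.trans hyz
  have hx : 0 < x := hy.trans hxy
  have hxyz : x*y*z = 1 := by rw [hb]; field_simp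
  have h9 : y^2 ≤ 9*z^2 := GSm_9 hg hz hyz hxy (by rw [← hQ]; positivity)
  obtain ⟨ρ, hρ, hmin⟩ := Pot_min (by positivity : 0 < 2*π*g) hz hyz hxy h9 (GSp_eq hz hyz hxy) (GSm_eq hz hyz hxy)
  have hC1 : 0 < riC1 g x y z := by
    rw [riC1_eq hx hy hz]
    have : 0 < Kint 1 (3/2) (3/2) (3/2) (x^2) (y^2) (z^2) := Kint_pos (by norm_num) (by norm_num) (by norm_num) (by positivity) (by positivity) (by positivity) (by norm_num)
    positivity
  have hC2 : 0 < riC2 g x y z := by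
    rw [riC2_eq hx hy hz]
    have : 0 < Kint 2 (3/2) (3/2) (3/2) (x^2) (y^2) (z^2) := Kint_pos (by norm_num) (by norm_num) (by norm_num) (by positivity) (by positivity) (by positivity) (by norm_num)
    positivity
  have d1 := det1 hz hyz hxy hL hR
  have d3 := det3 hz hyz hxy hL hR hC1 hC2 hP hQ
  have hβ := βf_pos hz (hyz.trans hxy)
  have E1 : 0 < αf y z - αf x z + βf x z*(R/L) := by
    have := α12 hz hyz hxy
    have : 0 < βf x z*(R/L) := by positivity
    linarith
  have E3 : 0 < αf x y - αf x z + βf x z*(R/L) := by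
    have := α32 hz hyz hxy
    have : 0 < βf x z*(R/L) := by positivity
    linarith
  set ps : Fin 10 → ℝ := ![x, y, 0, 0, 0, L, 0, 0, -R, 0] with hps
  have s0 : ps 0 = x := rfl
  have s1 : ps 1 = y := rfl
  have s5 : ps 5 = L := rfl
  have s8 : ps 8 = -R := rfl
  have c0 : ContinuousAt (fun p : Fin 10 → ℝ => p 0) ps := (continuous_apply _).continuousAt
  have c1 : ContinuousAt (fun p : Fin 10 → ℝ => p 1) ps := (continuous_apply _).continuousAt
  have c5 : ContinuousAt (fun p : Fin 10 → ℝ => p 5) ps := (continuous_apply _).continuousAt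
  have c8 : ContinuousAt (fun p : Fin 10 → ℝ => p 8) ps := (continuous_apply _).continuousAt
  have s3 : (ps 0*ps 1)⁻¹ = z := by rw [s0, s1, hb]
  have c3 : ContinuousAt (fun p : Fin 10 → ℝ => (p 0 * p 1)⁻¹) ps :=
    (c0.mul c1).inv₀ (by simp only [Pi.mul_apply, s0, s1]; positivity)
  have a2 := ctsα c0 c3 (by rw [s3]; exact hz) (by rw [s3, s0]; linarith)
  have b2 := ctsβ c0 c3 (by rw [s3]; exact hz) (by rw [s3, s0]; linarith)
  have a1 := ctsα c1 c3 (by rw [s3]; exact hz) (by rw [s3, s1]; linarith)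
  have b1 := ctsβ c1 c3 (by rw [s3]; exact hz) (by rw [s3, s1]; linarith)
  have a3 := ctsα c0 c1 (by rw [s1]; exact hy) (by rw [s1, s0]; linarith)
  have b3 := ctsβ c0 c1 (by rw [s1]; exact hy) (by rw [s1, s0]; linarith)
  have ev1 := ((a1.sub a2).add (b2.mul_const (R/L))).eventually_const_lt (u := 0) (by
    simp only [Pi.sub_apply, Pi.add_apply, Pi.mul_apply, Pi.pow_apply, s0, s1, ← hb]; exact E1)
  have ev2 := ((a3.sub a2).add (b2.mul_const (R/L))).eventually_const_lt (u := 0) (by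
    simp only [Pi.sub_apply, Pi.add_apply, Pi.mul_apply, Pi.pow_apply, s0, s1, ← hb]; exact E3)
  have ev3 := ((((a1.sub a2).add (b2.mul_const (R/L))).mul ((a1.sub a2).add (b2.mul_const (L/R)))).sub
    (b1.pow 2)).eventually_const_lt (u := 0) (by simp only [Pi.sub_apply, Pi.add_apply, Pi.mul_apply, Pi.pow_apply, s0, s1, ← hb]; exact d1)
  have ev4 := ((((a3.sub a2).add (b2.mul_const (R/L))).mul ((a3.sub a2).add (b2.mul_const (L/R)))).sub
    (b3.pow 2)).eventually_const_lt (u := 0) (by simp only [Pi.sub_apply, Pi.add_apply, Pi.mul_apply, Pi.pow_apply, s0, s1, ← hb]; exact d3)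
  have ev5 := c3.eventually_const_lt (u := 0) (by simp only [s3]; exact hz)
  have ev6 := (c1.sub c3).eventually_const_lt (u := 0) (by simp only [Pi.sub_apply]; rw [s3, s1]; linarith)
  have ev7 := (c0.sub c1).eventually_const_lt (u := 0) (by simp only [Pi.sub_apply]; rw [s0, s1]; linarith)
  have ev8 := c5.eventually_const_lt (u := 0) (by simp only [s5]; exact hL)
  have ev9 := c8.eventually_lt_const (u := 0) (by simp only [s8]; linarith)
  have ev10 := ((c0.div_const x).log (by simp only [s0]; positivity)).abs.eventually_lt_const (u := ρ) (by
    simp only [s0, div_self hx.ne']; simpa using hρ)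
  have ev11 := ((c3.div_const z).log (by simp only [s3]; positivity)).abs.eventually_lt_const (u := ρ) (by
    simp only [s3, div_self hz.ne']; simpa using hρ)
  filter_upwards [ev1, ev2, ev3, ev4, ev5, ev6, ev7, ev8, ev9, ev10, ev11] with p w1 w2 w3 w4 w5 w6 w7 w8 w9 w10 w11
  intro sl sr hne
  simp only [Pi.sub_apply, Pi.add_apply, Pi.mul_apply, Pi.pow_apply] at w1 w2 w3 w4 w6 w7
  exact H_min_alg hz hyz hxy hb hL hR hP hQ hmin rfl w1 w2 w3 w4 w5 w6 w7 w8 w9 w10 w11 sl sr hne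

end

section
open Real MeasureTheory Filter Topology

lemma Hred_diff {g : ℝ} {p : Fin 10 → ℝ} (hp : memB (p 0) (p 1)) : DifferentiableAt ℝ (Hred g) p := by
  obtain ⟨h0, h1, h3, h31, h10⟩ := memB_pos hp
  have A : ∀ i, DifferentiableAt ℝ (fun q : Fin 10 → ℝ => q i) p := fun i => differentiableAt_apply i p
  have A0 := A 0
  have A1 := A 1
  have A2 := A 2
  have A3 := A 3
  have A4 := A 4
  have A5 := A 5
  have A6 := A 6
  have A7 := A 7
  have A8 := A 8
  have A9 := A 9
  have B : DifferentiableAt ℝ (fun q : Fin 10 → ℝ => (q 0*q 1)⁻¹) p := (A0.mul A1).inv (mul_pos h0 h1).ne'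
  have ev : Hred g =ᶠ[𝓝 p] fun q => Tk (q 0) (q 1) (q 0*q 1)⁻¹ (q 2) (q 3)
     + (αf (q 0) (q 1)*(q 6^2+q 9^2) + 2*βf (q 0) (q 1)*q 6*q 9)/2
     + (αf (q 0) (q 0*q 1)⁻¹*(q 5^2+q 8^2) + 2*βf (q 0) (q 0*q 1)⁻¹*q 5*q 8)/2
     + (αf (q 1) (q 0*q 1)⁻¹*(q 4^2+q 7^2) + 2*βf (q 1) (q 0*q 1)⁻¹*q 4*q 7)/2
     - 2*π*g*Kint 0 (1/2) (1/2) (1/2) (q 0^2) (q 1^2) ((q 0*q 1)⁻¹^2) := by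
    filter_upwards [A0.continuousAt.eventually_const_lt h0, A1.continuousAt.eventually_const_lt h1] with q q0 q1
    exact Hred_eq g q q0.ne' q1.ne' rfl
  refine DifferentiableAt.congr_of_eventuallyEq ?_ ev
  have dv : ∀ (f h : (Fin 10 → ℝ) → ℝ), DifferentiableAt ℝ f p → DifferentiableAt ℝ h p → h p ≠ 0 →
      DifferentiableAt ℝ (fun q => f q/h q) p := by
    intro f h hf hh hn
    simp only [div_eq_mul_inv]
    exact hf.mul (hh.inv hn)
  have da : ∀ {f h : (Fin 10 → ℝ) → ℝ}, DifferentiableAt ℝ f p → DifferentiableAt ℝ h p → 0 < h p → h p < f p →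
      DifferentiableAt ℝ (fun q => αf (f q) (h q)) p := by
    intro f h df dh i1 i2
    have : (f p^2 - h p^2)^2 ≠ 0 := by
      have : 0 < f p^2 - h p^2 := by nlinarith
      positivity
    exact dv _ _ ((df.pow 2).add (dh.pow 2)) (((df.pow 2).sub (dh.pow 2)).pow 2) this
  have db : ∀ {f h : (Fin 10 → ℝ) → ℝ}, DifferentiableAt ℝ f p → DifferentiableAt ℝ h p → 0 < h p → h p < f p →
      DifferentiableAt ℝ (fun q => βf (f q) (h q)) p := by
    intro f h df dh i1 i2
    have : (f p^2 - h p^2)^2 ≠ 0 := by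
      have : 0 < f p^2 - h p^2 := by nlinarith
      positivity
    exact dv _ _ ((df.const_mul 2).mul dh) (((df.pow 2).sub (dh.pow 2)).pow 2) this
  have dd : ∀ {a b m n : (Fin 10 → ℝ) → ℝ}, DifferentiableAt ℝ a p → DifferentiableAt ℝ b p → DifferentiableAt ℝ m p → DifferentiableAt ℝ n p →
      DifferentiableAt ℝ (fun q => (a q*(m q^2+n q^2) + 2*b q*m q*n q)/2) p := by
    intro a b m n ha hb hm hn
    exact dv _ _ ((ha.mul ((hm.pow 2).add (hn.pow 2))).add (((hb.const_mul 2).mul hm).mul hn)) (differentiableAt_const 2) two_ne_zero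
  have K := (Kint_hasF' (k := 0) (a := 1/2) (b := 1/2) (c := 1/2) (by norm_num) (by norm_num) (by norm_num)
    (by norm_num) ((p 0)^2, (p 1)^2, ((p 0*p 1)⁻¹)^2) (by positivity) (by positivity) (by positivity)).differentiableAt
  have K2 := DifferentiableAt.comp (f := fun q : Fin 10 → ℝ => ((q 0)^2, (q 1)^2, ((q 0*q 1)⁻¹)^2)) p K
    ((A0.pow 2).prodMk ((A1.pow 2).prodMk (B.pow 2)))
  have T : DifferentiableAt ℝ (fun q : Fin 10 → ℝ => Tk (q 0) (q 1) (q 0*q 1)⁻¹ (q 2) (q 3)) p := by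
    have : 2 * (p 0 ^ 2 * p 1 ^ 2 + p 0 ^ 2 * (p 0*p 1)⁻¹ ^ 2 + p 1 ^ 2 * (p 0*p 1)⁻¹ ^ 2) ≠ 0 := by positivity
    unfold Tk
    refine dv (fun q => (q 1 ^ 2 + (q 0 * q 1)⁻¹ ^ 2) * q 0 ^ 2 * q 2 ^ 2 + (q 0 ^ 2 + (q 0 * q 1)⁻¹ ^ 2) * q 1 ^ 2 * q 3 ^ 2 - 2 * (q 0 * q 1)⁻¹ * q 2 * q 3) (fun q => 2 * (q 0 ^ 2 * q 1 ^ 2 + q 0 ^ 2 * (q 0 * q 1)⁻¹ ^ 2 + q 1 ^ 2 * (q 0 * q 1)⁻¹ ^ 2)) ?_ ?_ this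
    · exact (((((A1.pow 2).add (B.pow 2)).mul (A0.pow 2)).mul (A2.pow 2)).add
        ((((A0.pow 2).add (B.pow 2)).mul (A1.pow 2)).mul (A3.pow 2))).sub (((B.const_mul 2).mul A2).mul A3)
    · exact ((((A0.pow 2).mul (A1.pow 2)).add ((A0.pow 2).mul (B.pow 2))).add ((A1.pow 2).mul (B.pow 2))).const_mul 2
  exact (((T.add (dd (da A0 A1 h1 h10) (db A0 A1 h1 h10) A6 A9)).add
    (dd (da A0 B h3 (h31.trans h10)) (db A0 B h3 (h31.trans h10)) A5 A8)).add
    (dd (da A1 B h3 h31) (db A1 B h3 h31) A4 A7)).sub (K2.const_mul (2*π*g))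

lemma Hred_fderiv_sum (g : ℝ) (p v : Fin 10 → ℝ) : fderiv ℝ (Hred g) p v = ∑ i, v i * pd g i p := by
  have : v = ∑ i, v i • (Pi.single i 1 : Fin 10 → ℝ) := by
    ext j; simp [Finset.sum_apply, Pi.single_apply]
  conv_lhs => rw [this]
  simp [pd]

lemma H_conserve {g T : ℝ} {γ : ℝ → Fin 10 → ℝ} (h : IsSolution g γ (Set.Ico 0 T)) :
    ∀ t ∈ Set.Ico 0 T, Hred g (γ t) = Hred g (γ 0) ∧
      γ t 4^2 + γ t 5^2 + γ t 6^2 = γ 0 4^2 + γ 0 5^2 + γ 0 6^2 ∧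
      γ t 7^2 + γ t 8^2 + γ t 9^2 = γ 0 7^2 + γ 0 8^2 + γ 0 9^2 := by
  intro t ht
  have const : ∀ f : ℝ → ℝ, (∀ s ∈ Set.Ico 0 T, HasDerivAt f 0 s) → f t = f 0 := by
    intro f hf
    have sub : ∀ s ∈ Set.Icc 0 t, s ∈ Set.Ico 0 T := fun s hs => ⟨hs.1, hs.2.trans_lt ht.2⟩
    exact constant_of_has_deriv_right_zero (fun s hs => (hf s (sub s hs)).continuousAt.continuousWithinAt)
      (fun s hs => (hf s (sub s ⟨hs.1, hs.2.le⟩)).hasDerivWithinAt) t ⟨ht.1, le_rfl⟩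
  refine ⟨const (fun s => Hred g (γ s)) ?_, const (fun s => γ s 4^2 + γ s 5^2 + γ s 6^2) ?_,
    const (fun s => γ s 7^2 + γ s 8^2 + γ s 9^2) ?_⟩
  · intro s hs
    obtain ⟨hB, hd⟩ := h s hs
    have hγ : HasDerivAt γ (RVF g (γ s)) s := hasDerivAt_pi.2 hd
    have := (Hred_diff (g := g) hB).hasFDerivAt.comp_hasDerivAt s hγ
    rw [Hred_fderiv_sum] at this
    refine HasDerivAt.congr_deriv this ?_
    simp only [Fin.sum_univ_succ, RVF]
    simp
    ring
  · intro s hs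
    obtain ⟨hB, hd⟩ := h s hs
    refine HasDerivAt.congr_deriv ((((hd 4).pow 2).add ((hd 5).pow 2)).add ((hd 6).pow 2)) ?_
    simp [RVF]
    ring
  · intro s hs
    obtain ⟨hB, hd⟩ := h s hs
    refine HasDerivAt.congr_deriv ((((hd 7).pow 2).add ((hd 8).pow 2)).add ((hd 9).pow 2)) ?_
    simp [RVF]
    ring

end

section
open Real MeasureTheory Filter Topology

lemma pd_zero {g : ℝ} {p : Fin 10 → ℝ} (hB : memB (p 0) (p 1)) (i : Fin 10)
    (h : ∀ᶠ t : ℝ in 𝓝 0, Hred g p ≤ Hred g (p + t • (Pi.single i 1 : Fin 10 → ℝ))) : pd g i p = 0 := by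
  have hl : HasDerivAt (fun t : ℝ => p + t • (Pi.single i 1 : Fin 10 → ℝ)) (Pi.single i 1) 0 := by
    simpa using ((hasDerivAt_id (0:ℝ)).smul_const (Pi.single i 1 : Fin 10 → ℝ)).const_add p
  have hd : HasFDerivAt (Hred g) (fderiv ℝ (Hred g) p) (p + (0:ℝ) • (Pi.single i 1 : Fin 10 → ℝ)) := by
    simpa using (Hred_diff (g := g) hB).hasFDerivAt
  have := hd.comp_hasDerivAt (0:ℝ) hl
  refine IsLocalMin.hasDerivAt_eq_zero (f := Hred g ∘ fun t : ℝ => p + t • (Pi.single i 1 : Fin 10 → ℝ)) (a := 0) ?_ this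
  filter_upwards [h] with t ht
  simpa using ht

lemma equil {g x y z L R : ℝ} (hg : 0 < g) (hB : memB x y) (hb : z = (x*y)⁻¹)
    (hL : 0 < L) (hR : 0 < R) (hP : (L-R)^2 = GSp g x y z) (hQ : (L+R)^2 = GSm g x y z) :
    RVF g ![x, y, 0, 0, 0, L, 0, 0, -R, 0] = 0 := by
  obtain ⟨hx, hy, hz, hyz, hxy⟩ := memB_pos hB
  rw [← hb] at hz hyz
  have hm := H_min hg hz hyz hxy hb hL hR hP hQ
  have tt : ∀ i : Fin 10, Tendsto (fun t : ℝ => (![x, y, 0, 0, 0, L, 0, 0, -R, 0] : Fin 10 → ℝ) + t • (Pi.single i 1 : Fin 10 → ℝ)) (𝓝 0)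
      (𝓝 ![x, y, 0, 0, 0, L, 0, 0, -R, 0]) := by
    intro i
    have : Continuous (fun t : ℝ => (![x, y, 0, 0, 0, L, 0, 0, -R, 0] : Fin 10 → ℝ) + t • (Pi.single i 1 : Fin 10 → ℝ)) := by
      fun_prop
    have := this.tendsto 0
    simpa using this
  have A : ∀ i : Fin 10, i ∉ ({4,5,6,7,8,9} : Finset (Fin 10)) → pd g i ![x, y, 0, 0, 0, L, 0, 0, -R, 0] = 0 := by
    intro i hi
    refine pd_zero hB i ?_
    filter_upwards [(tt i).eventually hm] with t ht
    by_cases hne : (![x, y, 0, 0, 0, L, 0, 0, -R, 0] : Fin 10 → ℝ) + t • (Pi.single i 1 : Fin 10 → ℝ) = ![x, y, 0, 0, 0, L, 0, 0, -R, 0]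
    · rw [hne]
    · have e : ∀ j ∈ ({4,5,6,7,8,9} : Finset (Fin 10)), ((![x, y, 0, 0, 0, L, 0, 0, -R, 0] : Fin 10 → ℝ) + t • (Pi.single i 1 : Fin 10 → ℝ)) j
          = (![x, y, 0, 0, 0, L, 0, 0, -R, 0] : Fin 10 → ℝ) j := by
        intro j hj
        have : j ≠ i := fun h => hi (h ▸ hj)
        simp [Pi.single_apply, this]
      refine (ht ?_ ?_ hne).le
      · rw [e 4 (by decide), e 5 (by decide), e 6 (by decide)]
        simp
      · rw [e 7 (by decide), e 8 (by decide), e 9 (by decide)]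
        simp
  have B : ∀ i : Fin 10, i ∈ ({4,6,7,9} : Finset (Fin 10)) → pd g i ![x, y, 0, 0, 0, L, 0, 0, -R, 0] = 0 := by
    intro i hi
    refine pd_zero hB i (Eventually.of_forall fun t => ?_)
    have a1 : 0 ≤ αf y z := by unfold αf; positivity
    have a3 : 0 ≤ αf x y := by unfold αf; positivity
    set q := (![x, y, 0, 0, 0, L, 0, 0, -R, 0] : Fin 10 → ℝ) + t • (Pi.single i 1 : Fin 10 → ℝ) with hq
    have e : ∀ j : Fin 10, q j = (![x, y, 0, 0, 0, L, 0, 0, -R, 0] : Fin 10 → ℝ) j + if j = i then t else 0 := by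
      intro j
      rw [hq]
      simp [Pi.single_apply]
    have q0 := e 0
    have q1 := e 1
    have q2 := e 2
    have q3 := e 3
    have q4 := e 4
    have q5 := e 5
    have q6 := e 6
    have q7 := e 7
    have q8 := e 8
    have q9 := e 9
    clear_value q
    have t1 := mul_nonneg a1 (sq_nonneg t)
    have t3 := mul_nonneg a3 (sq_nonneg t)
    have i0 : i ≠ 0 := by rintro rfl; revert hi; decide
    have i1 : i ≠ 1 := by rintro rfl; revert hi; decide
    rw [if_neg i0.symm, add_zero] at q0
    rw [if_neg i1.symm, add_zero] at q1
    have q0' : q 0 = x := q0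
    have q1' : q 1 = y := q1
    rw [Hred_eq g q (by rw [q0']; exact hx.ne') (by rw [q1']; exact hy.ne') (b3 := z) (by rw [q0', q1']; exact hb),
      Hred_eq g ![x, y, 0, 0, 0, L, 0, 0, -R, 0] hx.ne' hy.ne' hb]
    simp only [Finset.mem_insert, Finset.mem_singleton] at hi
    rcases hi with rfl | rfl | rfl | rfl
    all_goals
      rw [q0, q1, q2, q3, q4, q5, q6, q7, q8, q9]
      simp
      linarith
  have a0 := A 0 (by decide)
  have a1 := A 1 (by decide)
  have a2 := A 2 (by decide)
  have a3 := A 3 (by decide)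
  have a4 := B 4 (by decide)
  have a6 := B 6 (by decide)
  have a7 := B 7 (by decide)
  have a9 := B 9 (by decide)
  unfold RVF
  rw [a0, a1, a2, a3, a4, a6, a7, a9]
  ext i
  fin_cases i <;> simp

lemma stab {g x y z L R : ℝ} (hg : 0 < g) (hB : memB x y) (hb : z = (x*y)⁻¹)
    (hL : 0 < L) (hR : 0 < R) (hP : (L-R)^2 = GSp g x y z) (hQ : (L+R)^2 = GSm g x y z) :
    LiapunovStable g L R ![x, y, 0, 0, 0, L, 0, 0, -R, 0] := by
  obtain ⟨hx, hy, hz, hyz, hxy⟩ := memB_pos hB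
  rw [← hb] at hz hyz
  have hm := H_min hg hz hyz hxy hb hL hR hP hQ
  have hBn : ∀ᶠ p : Fin 10 → ℝ in 𝓝 ![x, y, 0, 0, 0, L, 0, 0, -R, 0], memB (p 0) (p 1) := by
    have c0 : ContinuousAt (fun p : Fin 10 → ℝ => p 0) ![x, y, 0, 0, 0, L, 0, 0, -R, 0] := (continuous_apply _).continuousAt
    have c1 : ContinuousAt (fun p : Fin 10 → ℝ => p 1) ![x, y, 0, 0, 0, L, 0, 0, -R, 0] := (continuous_apply _).continuousAt
    have cs := c0.sqrt.inv₀ (show √x ≠ 0 by positivity)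
    exact (c1.eventually_lt c0 hxy).and ((cs.eventually_lt c1 hB.2.1).and (cs.eventually_const_lt hB.2.2))
  have hBs : memB ((![x, y, 0, 0, 0, L, 0, 0, -R, 0] : Fin 10 → ℝ) 0) ((![x, y, 0, 0, 0, L, 0, 0, -R, 0] : Fin 10 → ℝ) 1) := hB
  generalize (![x, y, 0, 0, 0, L, 0, 0, -R, 0] : Fin 10 → ℝ) = ps at *
  intro ε hε
  obtain ⟨r0, hr0, hball⟩ := Metric.eventually_nhds_iff.1 (hm.and hBn)
  obtain ⟨r, hr, hrr, hre⟩ : ∃ r, 0 < r ∧ r < r0 ∧ r < ε :=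
    ⟨min r0 ε/2, by positivity, by have := min_le_left r0 ε; linarith, by have := min_le_right r0 ε; linarith⟩
  set S : Set (Fin 10 → ℝ) := Metric.sphere ps r ∩ {p | p 4^2 + p 5^2 + p 6^2 = L^2 ∧ p 7^2+p 8^2+p 9^2 = R^2} with hS
  have Sc : IsCompact S := by
    refine (isCompact_sphere ps r).inter_right ?_
    have C : ∀ i : Fin 10, Continuous (fun p : Fin 10 → ℝ => p i) := fun i => continuous_apply i
    exact (isClosed_eq ((((C 4).pow 2).add ((C 5).pow 2)).add ((C 6).pow 2)) continuous_const).inter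
      (isClosed_eq ((((C 7).pow 2).add ((C 8).pow 2)).add ((C 9).pow 2)) continuous_const)
  have SB : ∀ p ∈ S, Hred g ps < Hred g p ∧ ContinuousAt (Hred g) p := by
    intro p hp
    have hd : dist p ps = r := hp.1
    have := hball (y := p) (by rw [hd]; exact hrr)
    refine ⟨this.1 hp.2.1 hp.2.2 ?_, (Hred_diff this.2).continuousAt⟩
    rintro rfl
    rw [dist_self] at hd
    exact hr.ne hd
  obtain ⟨M, hM, hMS⟩ : ∃ M, Hred g ps < M ∧ ∀ p ∈ S, M ≤ Hred g p := by
    rcases S.eq_empty_or_nonempty with h | h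
    · exact ⟨Hred g ps + 1, by linarith, by simp [h]⟩
    · obtain ⟨q, hq, hqm⟩ := Sc.exists_isMinOn h (fun p hp => (SB p hp).2.continuousWithinAt)
      exact ⟨Hred g q, (SB q hq).1, fun p hp => hqm hp⟩
  have hc : ContinuousAt (Hred g) ps := (Hred_diff hBs).continuousAt
  obtain ⟨d, hd, hdd⟩ := Metric.eventually_nhds_iff.1 (hc.eventually_lt_const hM)
  refine ⟨min d r, by positivity, ?_⟩
  intro T γ hγ iL iR hdist t ht
  have cons := H_conserve hγ
  have jL : γ 0 4^2 + γ 0 5^2 + γ 0 6^2 = L^2 := by rw [← iL, Real.sq_sqrt (by positivity)]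
  have jR : γ 0 7^2 + γ 0 8^2 + γ 0 9^2 = R^2 := by rw [← iR, Real.sq_sqrt (by positivity)]
  by_contra! hcon
  have cont : ContinuousOn (fun s => dist (γ s) ps) (Set.Icc 0 t) := by
    intro s hs
    have hγs : HasDerivAt γ (RVF g (γ s)) s := hasDerivAt_pi.2 (hγ s ⟨hs.1, hs.2.trans_lt ht.2⟩).2
    exact ContinuousAt.continuousWithinAt (hγs.continuousAt.dist continuousAt_const)
  obtain ⟨s, hs, hsr⟩ := intermediate_value_Icc ht.1 cont
    (show r ∈ Set.Icc _ _ from ⟨(hdist.trans_le (min_le_right _ _)).le, hre.le.trans hcon⟩)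
  obtain ⟨k1, k2, k3⟩ := cons s ⟨hs.1, hs.2.trans_lt ht.2⟩
  have := hMS (γ s) ⟨hsr, by rw [Set.mem_setOf_eq, k2, k3]; exact ⟨jL, jR⟩⟩
  have h2 := hdd (hdist.trans_le (min_le_left _ _))
  rw [k1] at this
  linarith

end

theorem stmt_5 (g b1 b2 b3 : ℝ) (hg : 0 < g) (hB : memB b1 b2) (hb3 : b3 = (b1 * b2)⁻¹)
    (h0 : 0 ≤ GSp g b1 b2 b3) (hlt : GSp g b1 b2 b3 < GSm g b1 b2 b3) :
    RVF g ![b1, b2, 0, 0, 0, NSp g b1 b2 b3, 0, 0, NSm g b1 b2 b3, 0] = 0 ∧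
    LiapunovStable g (NSp g b1 b2 b3) (-(NSm g b1 b2 b3))
      ![b1, b2, 0, 0, 0, NSp g b1 b2 b3, 0, 0, NSm g b1 b2 b3, 0] := by
  obtain ⟨L, hL⟩ : ∃ L, L = NSp g b1 b2 b3 := ⟨_, rfl⟩
  obtain ⟨R, hR⟩ : ∃ R, R = -NSm g b1 b2 b3 := ⟨_, rfl⟩
  have hR' : NSm g b1 b2 b3 = -R := by rw [hR, neg_neg]
  have s1 := Real.sqrt_lt_sqrt h0 hlt
  have s0 := Real.sqrt_nonneg (GSp g b1 b2 b3)
  have e1 := Real.sq_sqrt h0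
  have e2 := Real.sq_sqrt (h0.trans hlt.le)
  have L0 : 0 < L := by rw [hL, NSp]; linarith
  have R0 : 0 < R := by rw [hR, NSm]; linarith
  have hP : (L-R)^2 = GSp g b1 b2 b3 := by
    rw [hL, hR, NSp, NSm]; linear_combination e1
  have hQ : (L+R)^2 = GSm g b1 b2 b3 := by
    rw [hL, hR, NSp, NSm]; linear_combination e2
  rw [← hL, hR', neg_neg]
  exact ⟨equil hg hB hb3 L0 R0 hP hQ, stab hg hB hb3 L0 R0 hP hQ⟩
end
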